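/- arXiv:0906.1857 — 2 statements merged into one kernel-verified Lean document; each statement's English description precedes it below -/
import Mathlib

section
/- Let G be a Hamiltonian graph containing vertices v1, ..., vr each of degree at least r in G. Then any two vertices of G are connected by a path of length at least r. -/
open SimpleGraph

/-!
If `2 * r ≤ |V| + 1`, the longer arc of a Hamilton cycle between `a` and `b` is long enough.
Otherwise the degrees of any two of the given vertices add up to at least `|V| + 2`. As in the
Bondy–Chvátal closure, an edge joining two such vertices can be removed from a path from `a` to `b`
without shortening the path or moving its ends, so the set `S` of the given vertices may be assumed
to be a clique. The Hamilton cycle then provides vertex-disjoint paths from `a` and from `b` to `S`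
that meet the complement of `S`; joining them through all remaining vertices of `S` gives a path
with more than `|S|` vertices.
-/

section Walks

variable {V : Type*} {G : SimpleGraph V} {a b c d s t u v w x y : V}

theorem walk_support_append_cons (p : G.Walk a s) (h : G.Adj s t) (q : G.Walk t b) :
    (p.append (.cons h q)).support = p.support ++ q.support := by
  simp [Walk.support_append]

theorem walk_length_append_cons (p : G.Walk a s) (h : G.Adj s t) (q : G.Walk t b) :
    (p.append (.cons h q)).length = p.length + q.length + 1 := by
  simp [Walk.length_append, add_assoc]

theorem exists_eq_append_cons_of_infix_support {p : G.Walk a b} (h : [x, y] <:+: p.support) :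
    ∃ (q : G.Walk a x) (hxy : G.Adj x y) (r : G.Walk y b), p = q.append (.cons hxy r) := by
  have hxy := Walk.adj_of_infix_support h
  obtain ⟨q, r, hp⟩ : hxy.toWalk.IsSubwalk p := Walk.isSubwalk_iff_support_isInfix.2 (by simpa)
  exact ⟨q, hxy, r, by simpa [← Walk.append_assoc] using hp⟩

theorem eq_of_mem_support_of_isPath_append {p : G.Walk a s} {q : G.Walk s b}
    (h : (p.append q).IsPath) (hp : w ∈ p.support) (hq : w ∈ q.support) : w = s := by
  have hnd := h.support_nodup
  rw [Walk.support_append] at hnd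
  by_contra hws
  exact (List.nodup_append.1 hnd).2.2 w hp w (((Walk.mem_support_iff q).1 hq).resolve_left hws) rfl

theorem nodup_support_append_support {p : G.Walk a b} {q : G.Walk c d} (hp : p.IsPath)
    (hq : q.IsPath) (hpq : ∀ w ∈ p.support, w ∉ q.support) : (p.support ++ q.support).Nodup :=
  hp.support_nodup.append hq.support_nodup hpq

theorem exists_walk_support_eq_of_notMem_edges (p : (G ⊔ edge u v).Walk a b)
    (h : s(u, v) ∉ p.edges) : ∃ q : G.Walk a b, q.support = p.support := by
  have hG : ∀ e ∈ p.edges, e ∈ G.edgeSet := by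
    intro e he
    have := p.edges_subset_edgeSet he
    rw [edgeSet_sup] at this
    exact this.resolve_right fun heq => h (edgeSet_edge_subset heq ▸ he)
  exact ⟨p.transfer G hG, p.support_transfer hG⟩

end Walks

section Closure

variable {V : Type*} [Fintype V] {G : SimpleGraph V} [DecidableRel G.Adj] {a b u v : V}

theorem exists_common_adj_or_infix {l : List V} (hl : l.Nodup) (hne : l ≠ [])
    (h : Fintype.card V + 2 ≤ G.degree u + G.degree v) :
    (∃ w ∉ l, G.Adj u w ∧ G.Adj v w) ∨ ∃ x y, [x, y] <:+: l ∧ G.Adj u x ∧ G.Adj v y := by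
  classical
  -- `σ` shifts `l` cyclically, so away from the last entry `[x, σ x]` is an infix of `l`.
  set σ := l.formPerm
  set N := (G.neighborFinset u).map σ.toEmbedding
  have hN : N.card = G.degree u := Finset.card_map _
  have hinter : 1 < (N ∩ G.neighborFinset v).card := by
    have := Finset.card_union_add_card_inter N (G.neighborFinset v)
    have := Finset.card_le_univ (N ∪ G.neighborFinset v)
    rw [card_neighborFinset_eq_degree] at *
    omega
  obtain ⟨y, hy, hlast⟩ := Finset.exists_mem_ne hinter (σ (l.getLast hne))
  simp only [N, Finset.mem_inter, Finset.mem_map, mem_neighborFinset, Equiv.coe_toEmbedding] at hy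
  obtain ⟨⟨x, hux, rfl⟩, hvy⟩ := hy
  by_cases hx : x ∈ l
  · obtain ⟨i, hi, rfl⟩ := List.getElem_of_mem hx
    have hi' : i + 1 < l.length := by
      by_contra
      exact hlast (by rw [List.getLast_eq_getElem]; congr 2; omega)
    refine .inr ⟨l[i], l[i + 1], ?_, hux, ?_⟩
    · exact ⟨l.take i, l.drop (i + 2), by simp⟩
    · rwa [List.formPerm_apply_lt_getElem l hl i hi'] at hvy
  · rw [List.formPerm_apply_of_notMem hx] at hvy
    exact .inl ⟨x, hx, hux, hvy⟩

theorem exists_isPath_length_add_length_lt {p : G.Walk a u} {q : G.Walk v b}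
    (hpq : (p.support ++ q.support).Nodup)
    (h : Fintype.card V + 2 ≤ G.degree u + G.degree v) :
    ∃ r : G.Walk a b, r.IsPath ∧ p.length + q.length < r.length := by
  obtain ⟨w, hw, huw, hvw⟩ | ⟨x, y, hxy, hux, hvy⟩ :=
    exists_common_adj_or_infix hpq (by simp) h
  · refine ⟨p.append (.cons huw (.cons hvw.symm q)), .mk' ?_, ?_⟩
    · rw [walk_support_append_cons, Walk.support_cons]
      grind
    · simp only [walk_length_append_cons, Walk.length_cons]
      omega
  rcases List.infix_append_iff_ne_nil.1 hxy with hp | hq | hjoint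
  · obtain ⟨p₁, hxy, p₂, rfl⟩ := exists_eq_append_cons_of_infix_support hp
    refine ⟨(p₁.append (.cons hux.symm p₂.reverse)).append (.cons hvy.symm q), .mk' ?_, ?_⟩
    · rw [walk_support_append_cons] at hpq
      rw [walk_support_append_cons, walk_support_append_cons, Walk.support_reverse]
      exact ((p₂.support.reverse_perm.append_left _).append_right _).nodup_iff.2 hpq
    · simp only [walk_length_append_cons, Walk.length_reverse]
      omega
  · obtain ⟨q₁, hxy, q₂, rfl⟩ := exists_eq_append_cons_of_infix_support hq
    refine ⟨p.append (.cons hux (q₁.reverse.append (.cons hvy q₂))), .mk' ?_, ?_⟩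
    · rw [walk_support_append_cons] at hpq
      rw [walk_support_append_cons, walk_support_append_cons, Walk.support_reverse]
      exact ((q₁.support.reverse_perm.append_right _).append_left _).nodup_iff.2 hpq
    · simp only [walk_length_append_cons, Walk.length_reverse]
      omega
  · obtain ⟨l₁, l₂, hl₁, hl₂, hl, ⟨l, hp⟩, -⟩ := hjoint
    obtain ⟨rfl, -⟩ : l₁ = [x] ∧ l₂ = [y] := by
      simpa [List.cons_eq_append_iff, hl₁, hl₂] using hl
    have hxu : x = u := by
      have := p.getLast_support
      simpa [← hp] using this
    exact (hux.ne' hxu).elim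

theorem exists_isPath_length_le_of_isPath_sup_edge {p : (G ⊔ edge u v).Walk a b} (hp : p.IsPath)
    (h : Fintype.card V + 2 ≤ G.degree u + G.degree v) :
    ∃ q : G.Walk a b, q.IsPath ∧ p.length ≤ q.length := by
  by_cases he : s(u, v) ∈ p.edges
  · have hsplit : ∃ x y, [x, y] <:+: p.support ∧ s(u, v) = s(x, y) ∧
        Fintype.card V + 2 ≤ G.degree x + G.degree y := by
      rcases Walk.infix_support_iff_mem_edges.2 he with huv | hvu
      · exact ⟨u, v, huv, rfl, h⟩
      · exact ⟨v, u, hvu, Sym2.eq_swap, by omega⟩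
    obtain ⟨x, y, hinfix, hedge, hdeg⟩ := hsplit
    obtain ⟨p₁, hxy, p₂, rfl⟩ := exists_eq_append_cons_of_infix_support hinfix
    have hedges := hp.isTrail.edges_nodup
    rw [Walk.edges_append, Walk.edges_cons, ← hedge] at hedges
    obtain ⟨q₁, h₁⟩ := exists_walk_support_eq_of_notMem_edges p₁ (by grind)
    obtain ⟨q₂, h₂⟩ := exists_walk_support_eq_of_notMem_edges p₂ (by grind)
    have hnd : (q₁.support ++ q₂.support).Nodup := by
      rw [h₁, h₂, ← walk_support_append_cons p₁ hxy p₂]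
      exact hp.support_nodup
    obtain ⟨q, hq, hlen⟩ := exists_isPath_length_add_length_lt hnd hdeg
    refine ⟨q, hq, ?_⟩
    have := congrArg List.length h₁
    have := congrArg List.length h₂
    simp only [Walk.length_support, walk_length_append_cons] at *
    omega
  · obtain ⟨q, hq⟩ := exists_walk_support_eq_of_notMem_edges p he
    refine ⟨q, .mk' (hq ▸ hp.support_nodup), ?_⟩
    have := congrArg List.length hq
    simp only [Walk.length_support] at this
    omega

end Closure

section Clique

variable {V : Type*} {G : SimpleGraph V} {S : Finset V} {a b s t w y : V}

theorem exists_walk_support_eq_append (hS : G.IsClique S) (p : G.Walk a s) (hs : s ∈ S)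
    {l : List V} (hl : ∀ w ∈ l, w ∈ S) (hnd : (s :: l).Nodup) :
    ∃ t ∈ S, ∃ q : G.Walk a t, q.support = p.support ++ l := by
  induction l generalizing s with
  | nil => exact ⟨s, hs, p, by simp⟩
  | cons w l ih =>
    have hw : w ∈ S := hl w (by simp)
    have hsw : G.Adj s w := hS hs hw (by grind)
    obtain ⟨t, ht, q, hq⟩ := ih (p.concat hsw) hw (by grind) hnd.of_cons
    exact ⟨t, ht, q, by simpa [Walk.support_concat] using hq⟩

theorem exists_isPath_card_le_of_isClique (hS : G.IsClique S) {p : G.Walk a s} {q : G.Walk b t}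
    (hpq : (p.support ++ q.support).Nodup) (hs : s ∈ S) (ht : t ∈ S)
    (hout : ∃ y ∈ p.support ++ q.support, y ∉ S) :
    ∃ r : G.Walk a b, r.IsPath ∧ S.card ≤ r.length := by
  classical
  set l := (S \ (p.support ++ q.support).toFinset).toList
  have hl : ∀ w, w ∈ l ↔ w ∈ S ∧ w ∉ p.support ++ q.support := by simp [l]
  have hlnd : l.Nodup := Finset.nodup_toList _
  have hsp := p.end_mem_support
  obtain ⟨s', hs', p', hp'⟩ := exists_walk_support_eq_append hS p hs (l := l) (by grind) (by grind)
  have hst : s' ≠ t := by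
    have := p'.end_mem_support
    have := q.end_mem_support
    grind
  have hsupp : (p'.append (.cons (hS hs' ht hst) q.reverse)).support =
      p.support ++ l ++ q.support.reverse := by
    rw [walk_support_append_cons, hp', Walk.support_reverse]
  refine ⟨p'.append (.cons (hS hs' ht hst) q.reverse), .mk' (by grind), ?_⟩
  obtain ⟨y, hy, hyS⟩ := hout
  have hsub : insert y S ⊆ (p'.append (.cons (hS hs' ht hst) q.reverse)).support.toFinset := by
    intro w hw
    rw [List.mem_toFinset, hsupp]
    grind
  have := (Finset.card_le_card hsub).trans (List.toFinset_card_le _)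
  rw [Finset.card_insert_of_notMem hyS, Walk.length_support] at this
  omega

theorem exists_isPath_card_le_of_isClique_of_adj (hS : G.IsClique S) (ha : a ∈ S) (hb : b ∈ S)
    {p : G.Walk a b} (hp : p.IsPath) (hy : y ∈ p.support) (hyS : y ∉ S) (hwS : w ∈ S)
    (hwa : w ≠ a) (hwb : w ≠ b) (hyw : G.Adj y w) :
    ∃ q : G.Walk a b, q.IsPath ∧ S.card ≤ q.length := by
  obtain ⟨p₁, p₂, rfl⟩ := Walk.mem_support_iff_exists_append.1 hy
  have hya : y ≠ a := by grind
  have hyb : y ≠ b := by grind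
  by_cases hw : w ∈ p₁.support
  · have hw₂ : w ∉ p₂.support := fun hw₂ =>
      hyw.ne' (eq_of_mem_support_of_isPath_append hp hw hw₂)
    have ha₂ : a ∉ p₂.support := fun ha₂ =>
      hya.symm (eq_of_mem_support_of_isPath_append hp p₁.start_mem_support ha₂)
    refine exists_isPath_card_le_of_isClique hS (p := .nil) (q := p₂.reverse.concat hyw)
      (nodup_support_append_support .nil (hp.of_append_right.reverse.concat (by simpa) hyw) ?_)
      ha hwS ⟨y, by simp [Walk.support_concat], hyS⟩
    simp [Walk.support_concat, ha₂, hwa.symm]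
  · have hb₁ : b ∉ p₁.support := fun hb₁ =>
      hyb.symm (eq_of_mem_support_of_isPath_append hp hb₁ p₂.end_mem_support)
    refine exists_isPath_card_le_of_isClique hS (p := p₁.concat hyw) (q := .nil)
      (nodup_support_append_support (hp.of_append_left.concat hw hyw) .nil ?_) hwS hb
      ⟨y, by simp [Walk.support_concat], hyS⟩
    grind [Walk.support_concat, Walk.support_nil]

theorem exists_adj_notMem_of_card_le_degree [Fintype (G.neighborSet w)] (hw : w ∈ S)
    (h : S.card ≤ G.degree w) : ∃ y ∉ S, G.Adj y w := by
  classical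
  obtain ⟨y, hy, hyS⟩ : ∃ y ∈ G.neighborFinset w, y ∉ S.erase w := by
    refine Finset.exists_mem_notMem_of_card_lt_card ?_
    rw [card_neighborFinset_eq_degree]
    exact (Finset.card_erase_lt_of_mem hw).trans_le h
  rw [mem_neighborFinset] at hy
  exact ⟨y, fun hyS' => hyS (Finset.mem_erase.2 ⟨hy.ne', hyS'⟩), hy.symm⟩

end Clique

section Linkage

variable {V : Type*} {G : SimpleGraph V} {a b s t : V}

/-- Two vertices `a` and `b` are linked to a set `S` if there are vertex-disjoint paths of `G`
joining `a` and `b` to two vertices of `S`. The `Nodup` condition says both that the two walks are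
paths and that they are disjoint; a path may have length `0` or meet `S` before its end. -/
def IsLinkedTo (G : SimpleGraph V) (a b : V) (S : Set V) : Prop :=
  ∃ s ∈ S, ∃ t ∈ S, ∃ (p : G.Walk a s) (q : G.Walk b t), (p.support ++ q.support).Nodup

theorem IsLinkedTo.mono {S T : Set V} (hST : S ⊆ T) (h : IsLinkedTo G a b S) :
    IsLinkedTo G a b T := by
  obtain ⟨s, hs, t, ht, hpq⟩ := h
  exact ⟨s, hST hs, t, hST ht, hpq⟩

theorem IsLinkedTo.exists_isPath_card_le {S : Finset V} (h : IsLinkedTo G a b S)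
    (hS : G.IsClique S) (hout : a ∉ S ∨ b ∉ S) :
    ∃ p : G.Walk a b, p.IsPath ∧ S.card ≤ p.length := by
  obtain ⟨s, hs, t, ht, p, q, hpq⟩ := h
  exact exists_isPath_card_le_of_isClique hS hpq hs ht
    (hout.elim (fun ha => ⟨a, by simp, ha⟩) fun hb => ⟨b, by simp, hb⟩)

theorem isLinkedTo_of_isPath_append {p : G.Walk s b} {q : G.Walk b t} (h : (p.append q).IsPath)
    (ha : a ∈ p.support) (hab : a ≠ b) : IsLinkedTo G a b {s, t} := by
  classical
  refine ⟨s, by simp, t, by simp, (p.takeUntil a ha).reverse, q,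
    nodup_support_append_support (h.of_append_left.takeUntil ha).reverse h.of_append_right ?_⟩
  intro w hw hwq
  rw [Walk.support_reverse, List.mem_reverse] at hw
  obtain rfl := eq_of_mem_support_of_isPath_append h (p.support_takeUntil_subset_support ha hw) hwq
  exact Walk.endpoint_notMem_support_takeUntil h.of_append_left ha hab.symm hw

theorem isLinkedTo_of_isPath {p : G.Walk s t} (hp : p.IsPath) (ha : a ∈ p.support)
    (hb : b ∈ p.support) (hab : a ≠ b) : IsLinkedTo G a b {s, t} := by
  obtain ⟨p₁, p₂, rfl⟩ := Walk.mem_support_iff_exists_append.1 hb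
  rcases Walk.mem_support_append_iff _ _ |>.1 ha with ha₁ | ha₂
  · exact isLinkedTo_of_isPath_append hp ha₁ hab
  · rw [Set.pair_comm]
    exact isLinkedTo_of_isPath_append (p := p₂.reverse) (q := p₁.reverse)
      (by simpa using hp.reverse) (by simpa) hab

end Linkage

section HamiltonianArcs

variable {V : Type*} {G : SimpleGraph V} {a b s t : V}

/-- The two arcs of a Hamilton cycle between `a` and `b`: internally disjoint paths from `a` to `b`
that together visit every vertex. Both are directed from `a` to `b`, so that they play symmetric
roles. -/
structure AreHamiltonianArcs (p q : G.Walk a b) : Prop where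
  isPath_left : p.IsPath
  isPath_right : q.IsPath
  mem_or_mem (w : V) : w ∈ p.support ∨ w ∈ q.support
  eq_or_eq {w : V} : w ∈ p.support → w ∈ q.support → w = a ∨ w = b

theorem AreHamiltonianArcs.symm {p q : G.Walk a b} (h : AreHamiltonianArcs p q) :
    AreHamiltonianArcs q p where
  isPath_left := h.isPath_right
  isPath_right := h.isPath_left
  mem_or_mem w := (h.mem_or_mem w).symm
  eq_or_eq hq hp := h.eq_or_eq hp hq

theorem exists_areHamiltonianArcs [Fintype V] [DecidableEq V] (hG : G.IsHamiltonian)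
    (hab : a ≠ b) : ∃ p q : G.Walk a b, AreHamiltonianArcs p q := by
  have : Nontrivial V := ⟨a, b, hab⟩
  obtain ⟨c, hc⟩ := hG.exists_isHamiltonianCycle a
  obtain ⟨p, q, rfl⟩ := Walk.mem_support_iff_exists_append.1 (hc.mem_support b)
  refine ⟨p, q.reverse, ?_, ?_, fun w => ?_, fun {w} hwp hwq => ?_⟩
  · exact hc.isCycle.isPath_of_append_left (Walk.not_nil_of_ne hab.symm)
  · exact (hc.isCycle.isPath_of_append_right (Walk.not_nil_of_ne hab)).reverse
  · simpa using hc.mem_support w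
  · have hnd := hc.isCycle.support_nodup
    rw [Walk.tail_support_append] at hnd
    rw [Walk.support_reverse, List.mem_reverse] at hwq
    by_contra! hne
    exact (List.nodup_append.1 hnd).2.2
      w (((Walk.mem_support_iff p).1 hwp).resolve_left hne.1)
      w (((Walk.mem_support_iff q).1 hwq).resolve_left hne.2) rfl

theorem AreHamiltonianArcs.card_le_length_add_length [Fintype V] {p q : G.Walk a b}
    (h : AreHamiltonianArcs p q) (hab : a ≠ b) : Fintype.card V ≤ p.length + q.length := by
  classical
  have hunion : p.support.toFinset ∪ q.support.toFinset = Finset.univ :=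
    Finset.eq_univ_of_forall fun w => by simpa using h.mem_or_mem w
  have hinter : {a, b} ⊆ p.support.toFinset ∩ q.support.toFinset := by
    simp [Finset.insert_subset_iff]
  have := Finset.card_union_add_card_inter p.support.toFinset q.support.toFinset
  have := Finset.card_le_card hinter
  have := List.toFinset_card_le p.support
  have := List.toFinset_card_le q.support
  rw [hunion, Finset.card_univ, Finset.card_pair hab, Walk.length_support] at *
  omega

theorem AreHamiltonianArcs.isLinkedTo_of_notMem {p q : G.Walk s t} (h : AreHamiltonianArcs p q)
    (ha : a ∉ q.support) (hb : b ∉ p.support) : IsLinkedTo G a b {s, t} := by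
  classical
  have hap : a ∈ p.support := (h.mem_or_mem a).resolve_right ha
  have hbq : b ∈ q.reverse.support := by simpa using (h.mem_or_mem b).resolve_left hb
  have hta : t ≠ a := by rintro rfl; simp at ha
  have hsb : s ≠ b := by rintro rfl; simp at hb
  refine ⟨s, by simp, t, by simp, (p.takeUntil a hap).reverse, (q.reverse.takeUntil b hbq).reverse,
    nodup_support_append_support (h.isPath_left.takeUntil hap).reverse
      (h.isPath_right.reverse.takeUntil hbq).reverse ?_⟩
  intro w hwp hwq
  rw [Walk.support_reverse, List.mem_reverse] at hwp hwq
  rcases h.eq_or_eq (p.support_takeUntil_subset_support hap hwp)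
    (by simpa using q.reverse.support_takeUntil_subset_support hbq hwq) with rfl | rfl
  · exact Walk.endpoint_notMem_support_takeUntil h.isPath_right.reverse hbq hsb hwq
  · exact Walk.endpoint_notMem_support_takeUntil h.isPath_left hap hta hwp

theorem AreHamiltonianArcs.isLinkedTo {p q : G.Walk s t} (h : AreHamiltonianArcs p q)
    (hab : a ≠ b) : IsLinkedTo G a b {s, t} := by
  by_cases hp : a ∈ p.support ∧ b ∈ p.support
  · exact isLinkedTo_of_isPath h.isPath_left hp.1 hp.2 hab
  by_cases hq : a ∈ q.support ∧ b ∈ q.support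
  · exact isLinkedTo_of_isPath h.isPath_right hq.1 hq.2 hab
  by_cases ha : a ∈ q.support
  · exact h.symm.isLinkedTo_of_notMem (by have := h.mem_or_mem b; tauto) (by tauto)
  · exact h.isLinkedTo_of_notMem ha (by have := h.mem_or_mem a; tauto)

end HamiltonianArcs

section Hamiltonian

variable {V : Type*} [Fintype V] [DecidableEq V] {G : SimpleGraph V} {S : Finset V} {a b : V}
  {r : ℕ}

theorem exists_isPath_of_two_mul_le_card_add_one (hG : G.IsHamiltonian) (hab : a ≠ b)
    (hr : 2 * r ≤ Fintype.card V + 1) : ∃ p : G.Walk a b, p.IsPath ∧ r ≤ p.length := by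
  obtain ⟨p, q, h⟩ := exists_areHamiltonianArcs hG hab
  have := h.card_le_length_add_length hab
  by_cases hp : r ≤ p.length
  · exact ⟨p, h.isPath_left, hp⟩
  · exact ⟨q, h.isPath_right, by omega⟩

theorem exists_isPath_card_le_of_isHamiltonian (hG : G.IsHamiltonian) (hS : G.IsClique S)
    (hcard : 3 ≤ S.card) (hout : ∀ w ∈ S, ∃ y ∉ S, G.Adj y w) (hab : a ≠ b) :
    ∃ p : G.Walk a b, p.IsPath ∧ S.card ≤ p.length := by
  by_cases hmem : a ∈ S ∧ b ∈ S
  · obtain ⟨w, hw, hwab⟩ : ∃ w ∈ S, w ∉ ({a, b} : Finset V) :=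
      Finset.exists_mem_notMem_of_card_lt_card (Finset.card_le_two.trans_lt hcard)
    obtain ⟨hwa, hwb⟩ : w ≠ a ∧ w ≠ b := by simpa using hwab
    obtain ⟨y, hyS, hyw⟩ := hout w hw
    obtain ⟨p, q, h⟩ := exists_areHamiltonianArcs hG hab
    obtain ⟨p, hp, hy⟩ : ∃ p : G.Walk a b, p.IsPath ∧ y ∈ p.support :=
      (h.mem_or_mem y).elim (⟨p, h.isPath_left, ·⟩) (⟨q, h.isPath_right, ·⟩)
    exact exists_isPath_card_le_of_isClique_of_adj hS hmem.1 hmem.2 hp hy hyS hw hwa hwb hyw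
  · obtain ⟨s, hs, t, ht, hst⟩ := Finset.one_lt_card.1 (show 1 < S.card by omega)
    obtain ⟨p, q, h⟩ := exists_areHamiltonianArcs hG hst
    exact ((h.isLinkedTo hab).mono (Set.pair_subset hs ht)).exists_isPath_card_le hS
      (not_and_or.1 hmem)

theorem exists_isPath_card_le_of_card_le_degree [inst : DecidableRel G.Adj] (hG : G.IsHamiltonian)
    (hcard : Fintype.card V + 2 ≤ 2 * S.card) (hdeg : ∀ w ∈ S, S.card ≤ G.degree w)
    (hab : a ≠ b) : ∃ p : G.Walk a b, p.IsPath ∧ S.card ≤ p.length := by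
  induction G using WellFoundedGT.induction generalizing inst with
  | _ G ih =>
  by_cases hS : G.IsClique S
  · obtain ⟨w, hw⟩ : S.Nonempty := Finset.card_pos.1 (by omega)
    have hlt := (hdeg w hw).trans_lt (G.degree_lt_card_verts w)
    exact exists_isPath_card_le_of_isHamiltonian hG hS (by omega)
      (fun w hw => exists_adj_notMem_of_card_le_degree hw (hdeg w hw)) hab
  · classical
    obtain ⟨u, hu, v, hv, huv, hnadj⟩ : ∃ u ∈ S, ∃ v ∈ S, u ≠ v ∧ ¬ G.Adj u v := by
      simpa [isClique_iff, Set.Pairwise] using hS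
    have hlt : G < G ⊔ edge u v := G.lt_sup_edge u v huv hnadj
    obtain ⟨p, hp, hlen⟩ := ih _ hlt (hG.mono hlt.le)
      fun w hw => (hdeg w hw).trans (degree_le_of_le hlt.le)
    have huv_deg := add_le_add (hdeg u hu) (hdeg v hv)
    obtain ⟨q, hq, hpq⟩ := exists_isPath_length_le_of_isPath_sup_edge hp (by omega)
    exact ⟨q, hq, hlen.trans hpq⟩

end Hamiltonian

/-- in a Hamiltonian graph containing `r` distinct vertices each of
degree at least `r`, any two vertices are connected by a path of length at least `r`. -/
theorem stmt13 {V : Type*} [Fintype V] [DecidableEq V] (G : SimpleGraph V) [DecidableRel G.Adj]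
    (r : ℕ) (x : V) (c : G.Walk x x) (hc : c.IsHamiltonianCycle)
    (v : Fin r → V) (hv : Function.Injective v)
    (hdeg : ∀ i, r ≤ G.degree (v i)) :
    ∀ a b : V, a ≠ b → ∃ p : G.Walk a b, p.IsPath ∧ r ≤ p.length := by
  intro a b hab
  have hG : G.IsHamiltonian := fun _ => ⟨x, c, hc⟩
  rcases le_or_gt (2 * r) (Fintype.card V + 1) with hsmall | hlarge
  · exact exists_isPath_of_two_mul_le_card_add_one hG hab hsmall
  · obtain ⟨S, rfl, hdegS⟩ : ∃ S : Finset V, S.card = r ∧ ∀ w ∈ S, r ≤ G.degree w :=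
      ⟨Finset.univ.map ⟨v, hv⟩, by simp, by simpa using hdeg⟩
    exact exists_isPath_card_le_of_card_le_degree hG hlarge hdegS hab
end

section
/- Every 4-connected finite graph G either has a cycle of length at least 4δ − 2κ or has a dominating cycle, where δ is the minimum degree and κ the connectivity of G. -/
open SimpleGraph

variable {V : Type*}

/-- `S` is a cut-set: removing `S` leaves a disconnected or trivial graph. -/
def IsCutSet (G : SimpleGraph V) (S : Set V) : Prop :=
  ¬ (G.induce Sᶜ).Connected ∨ Sᶜ.Subsingleton

/-- The connectivity `κ` of `G`: the minimum number of vertices whose removal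
disconnects or trivializes `G`. -/
noncomputable def kappa (G : SimpleGraph V) : ℕ :=
  sInf {k | ∃ S : Set V, S.ncard = k ∧ IsCutSet G S}

/-- `G` has a dominating cycle: a cycle `C` such that the vertices outside `C`
form an independent set. -/
def HasDominatingCycle (G : SimpleGraph V) : Prop :=
  ∃ (x : V) (C : G.Walk x x), C.IsCycle ∧
    ∀ a b : V, a ∉ C.support → b ∉ C.support → ¬ G.Adj a b

/-! Let `C` be a longest cycle, encoded as a finite set that a permutation `σ` permutes cyclically
along edges, and suppose that `C` is not dominating, so that some edge lies outside `C`. If some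
component `H` of `G - C` has at least three vertices, then long paths through `H` between the
attachments of its end blocks force `4δ ≤ |C| + 8`, which suffices because `κ ≥ 4`. Otherwise every
vertex outside `C` has at most one neighbour outside `C`. For an edge `xy` outside `C` the
successors of the neighbours of `x` or `y` on `C`, and the second successors of their common
neighbours, then form a set of at least `2δ - 2` vertices. As `C` is longest, hardly any edges join
these vertices to each other, and any other vertex outside `C` is adjacent to at most one of them.
Counting this set together with the neighbourhoods on `C` of two vertices on different sides of a
minimum separation gives `4δ ≤ |C| + 2κ`. -/

/-! ### Paths and components inside a vertex set -/

/-- `G` has a path of length `n` from `x` to `z` all of whose vertices lie in `B`. -/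
def PathIn (G : SimpleGraph V) (B : Finset V) (x z : V) (n : ℕ) : Prop :=
  ∃ p : G.Walk x z, p.IsPath ∧ p.length = n ∧ ∀ v ∈ p.support, v ∈ B

open Classical in
/-- The vertex set of the component of `u` in `G[B]`, empty if `u ∉ B`. -/
noncomputable def componentIn (G : SimpleGraph V) (B : Finset V) (u : V) : Finset V :=
  {v ∈ B | ∃ p : G.Walk u v, ∀ w ∈ p.support, w ∈ B}

open Classical in
/-- The boundary of `T` in `G[B]`: the vertices of `B` outside `T` with a neighbour in `T`. -/
noncomputable def boundary (G : SimpleGraph V) (B T : Finset V) : Finset V :=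
  {v ∈ B | v ∉ T ∧ ∃ t ∈ T, G.Adj t v}

open Classical in
/-- The neighbours of `v` that lie in `B`. -/
noncomputable def neighborsIn (G : SimpleGraph V) (B : Finset V) (v : V) : Finset V :=
  {w ∈ B | G.Adj v w}

section

variable {G : SimpleGraph V} {B D T : Finset V} {u v w x z : V} {m n : ℕ}

lemma start_notMem_tail_support {p : G.Walk u v} (hp : p.IsPath) : u ∉ p.support.tail := by
  have h := hp.support_nodup
  rw [← p.cons_tail_support] at h
  exact (List.nodup_cons.1 h).1

namespace PathIn

lemma mono (h : PathIn G B x z n) (hBD : B ⊆ D) : PathIn G D x z n := by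
  obtain ⟨p, hp, hl, hs⟩ := h
  exact ⟨p, hp, hl, fun v hv => hBD (hs v hv)⟩

lemma left_mem (h : PathIn G B x z n) : x ∈ B := by
  obtain ⟨p, -, -, hs⟩ := h
  exact hs x p.start_mem_support

lemma nil (hx : x ∈ B) : PathIn G B x x 0 :=
  ⟨Walk.nil, Walk.IsPath.nil, rfl, by simpa using hx⟩

lemma symm (h : PathIn G B x z n) : PathIn G B z x n := by
  obtain ⟨p, hp, hl, hs⟩ := h
  exact ⟨p.reverse, hp.reverse, by simpa using hl, by simpa using hs⟩

lemma exists_isCycle (h₁ : PathIn G B u v n) (h₂ : PathIn G D v u m)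
    (h : ∀ y ∈ B, y ∈ D → y = u ∨ y = v) (hnm : 3 ≤ n + m) :
    ∃ (y : V) (C : G.Walk y y), C.IsCycle ∧ C.length = n + m := by
  obtain ⟨p, hp, hl, hs⟩ := h₁
  obtain ⟨q, hq, hl', hs'⟩ := h₂
  refine ⟨u, p.append q, hp.isCycle_append hq (fun y hy hy' => ?_) (by lia), by simp [hl, hl']⟩
  rcases h y (hs y (List.mem_of_mem_tail hy)) (hs' y (List.mem_of_mem_tail hy')) with rfl | rfl
  · exact start_notMem_tail_support hp hy
  · exact start_notMem_tail_support hq hy'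

variable [DecidableEq V]

lemma append (h₁ : PathIn G B u v n) (h₂ : PathIn G D v w m)
    (h : ∀ y ∈ B, y ∈ D → y = v) : PathIn G (B ∪ D) u w (n + m) := by
  obtain ⟨p, hp, hl, hs⟩ := h₁
  obtain ⟨q, hq, hl', hs'⟩ := h₂
  refine ⟨p.append q, ?_, by simp [hl, hl'], fun y hy => ?_⟩
  · rw [Walk.isPath_def, Walk.support_append, List.nodup_append']
    refine ⟨hp.support_nodup, hq.support_nodup.tail, fun y hy hy' => ?_⟩
    obtain rfl := h y (hs y hy) (hs' y (List.mem_of_mem_tail hy'))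
    exact start_notMem_tail_support hq hy'
  · rw [Walk.mem_support_append_iff] at hy
    exact Finset.mem_union.2 (hy.imp (hs y) (hs' y))

lemma cons (h : G.Adj u v) (h₂ : PathIn G B v w n) (hu : u ∉ B) :
    PathIn G (insert u B) u w (n + 1) := by
  obtain ⟨p, hp, hl, hs⟩ := h₂
  refine ⟨p.cons h, hp.cons fun hup => hu (hs u hup), by simp [hl], ?_⟩
  simpa using fun y hy => Or.inr (hs y hy)

end PathIn

lemma mem_neighborsIn : w ∈ neighborsIn G B v ↔ w ∈ B ∧ G.Adj v w := by
  simp [neighborsIn]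

lemma mem_boundary : v ∈ boundary G B T ↔ v ∈ B ∧ v ∉ T ∧ ∃ t ∈ T, G.Adj t v := by
  simp [boundary]

lemma mem_componentIn :
    v ∈ componentIn G B u ↔ ∃ p : G.Walk u v, ∀ w ∈ p.support, w ∈ B := by
  simp only [componentIn, Finset.mem_filter, and_iff_right_iff_imp]
  exact fun ⟨p, hp⟩ => hp v p.end_mem_support

lemma self_mem_componentIn (hu : u ∈ B) : u ∈ componentIn G B u :=
  mem_componentIn.2 ⟨Walk.nil, by simpa using hu⟩

lemma componentIn_subset : componentIn G B u ⊆ B := by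
  classical exact Finset.filter_subset _ _

lemma mem_componentIn_of_adj (hv : v ∈ componentIn G B u) (h : G.Adj v w) (hw : w ∈ B) :
    w ∈ componentIn G B u := by
  obtain ⟨p, hp⟩ := mem_componentIn.1 hv
  refine mem_componentIn.2 ⟨p.concat h, fun y hy => ?_⟩
  rw [Walk.support_concat, List.mem_append, List.mem_singleton] at hy
  rcases hy with hy | rfl
  · exact hp y hy
  · exact hw

lemma exists_pathIn_componentIn (hv : v ∈ componentIn G B u) (hw : w ∈ componentIn G B u) :
    ∃ n, PathIn G (componentIn G B u) v w n := by
  classical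
  have support_subset : ∀ {v} (p : G.Walk u v), (∀ w ∈ p.support, w ∈ B) →
      ∀ w ∈ p.support, w ∈ componentIn G B u := fun p hp w hw =>
    mem_componentIn.2
      ⟨p.takeUntil w hw, fun y hy => hp y (p.support_takeUntil_subset_support hw hy)⟩
  obtain ⟨p, hp⟩ := mem_componentIn.1 hv
  obtain ⟨q, hq⟩ := mem_componentIn.1 hw
  refine ⟨_, (p.reverse.append q).bypass, Walk.bypass_isPath _, rfl, fun y hy => ?_⟩
  have hy := Walk.support_bypass_subset_support _ hy
  rw [Walk.mem_support_append_iff, Walk.support_reverse, List.mem_reverse] at hy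
  exact hy.elim (support_subset p hp y) (support_subset q hq y)

lemma boundary_componentIn_subset [DecidableEq V] :
    boundary G B (componentIn G D u) ⊆ B \ D := by
  intro y hy
  obtain ⟨hyB, hyC, t, ht, hty⟩ := mem_boundary.1 hy
  exact Finset.mem_sdiff.2 ⟨hyB, fun hyD => hyC (mem_componentIn_of_adj ht hty hyD)⟩

end

/-! ### Long paths with prescribed ends -/

/-- `G[B] + xz` is 2-connected: every nonempty subset of `B` avoiding `x` and `z` has at least two
boundary vertices. -/
def TwoConnectedBetween (G : SimpleGraph V) (B : Finset V) (x z : V) : Prop :=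
  ∀ T ⊆ B, x ∉ T → z ∉ T → T.Nonempty → 2 ≤ (boundary G B T).card

/-- The hypotheses of the long path lemma: `G[B] + xz` is 2-connected and every vertex of `B`
other than `x`, `z` and one exceptional vertex `e` has at least `k` neighbours in `B`. The last
field excludes the degenerate sets `{x, z}` and, for `3 ≤ k`, `{x, z, e}`. -/
structure PathFrame (G : SimpleGraph V) (B : Finset V) (x z e : V) (k : ℕ) : Prop where
  left_mem : x ∈ B
  right_mem : z ∈ B
  ne : x ≠ z
  twoConnected : TwoConnectedBetween G B x z
  le_card_neighborsIn : ∀ v ∈ B, v ≠ x → v ≠ z → v ≠ e → k ≤ (neighborsIn G B v).card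
  exists_mem : ∃ v ∈ B, v ≠ x ∧ v ≠ z ∧ (3 ≤ k → v ≠ e)

/-- `U` is a nonempty subset of `B` avoiding `x` and `z` whose boundary in `G[B]` is contained in
`{v, x}`; the long path lemma is proved by descending into such sets. -/
structure Flap (G : SimpleGraph V) (B : Finset V) (x z : V) (U : Finset V) (v : V) : Prop where
  subset : U ⊆ B
  left_notMem : x ∉ U
  right_notMem : z ∉ U
  nonempty : U.Nonempty
  tip_mem : v ∈ B
  tip_notMem : v ∉ U
  tip_ne : v ≠ x
  closed : ∀ t ∈ U, ∀ w ∈ B, G.Adj t w → w ∈ U ∨ w = v ∨ w = x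

section

variable {G : SimpleGraph V} {B D T U : Finset V} {x z v e x' : V} {k n : ℕ}

lemma TwoConnectedBetween.exists_flap (h2 : TwoConnectedBetween G B x z) (hT : T ⊆ B)
    (hx : x ∉ T) (hz : z ∉ T) (hne : T.Nonempty) (hD : (boundary G D T).card ≤ 1)
    (hBD : ∀ t ∈ T, ∀ w ∈ B, G.Adj t w → w ∈ D ∨ w = x) : ∃ v, Flap G B x z T v := by
  classical
  obtain ⟨v, hv, hvx⟩ := Finset.exists_mem_ne (h2 T hT hx hz hne) x
  obtain ⟨hvB, hvT, t, ht, htv⟩ := mem_boundary.1 hv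
  have hvD : v ∈ boundary G D T :=
    mem_boundary.2 ⟨(hBD t ht v hvB htv).resolve_right hvx, hvT, t, ht, htv⟩
  refine ⟨v, hT, hx, hz, hne, hvB, hvT, hvx, fun s hs w hw hsw => ?_⟩
  by_cases hwT : w ∈ T
  · exact Or.inl hwT
  · refine Or.inr ((hBD s hs w hw hsw).imp_left fun hwD => ?_)
    exact Finset.card_le_one.1 hD w (mem_boundary.2 ⟨hwD, hwT, s, hs, hsw⟩) v hvD

namespace Flap

lemma exists_adj (hU : Flap G B x z U v) (h2 : TwoConnectedBetween G B x z) :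
    (∃ t ∈ U, G.Adj t x) ∧ ∃ t ∈ U, G.Adj t v := by
  classical
  have hsub : boundary G B U ⊆ {v, x} := by
    intro y hy
    obtain ⟨hyB, hyU, t, ht, hty⟩ := mem_boundary.1 hy
    simpa using (hU.closed t ht y hyB hty).resolve_left hyU
  have heq := Finset.eq_of_subset_of_card_le hsub <| Finset.card_le_two.trans <|
    h2 U hU.subset hU.left_notMem hU.right_notMem hU.nonempty
  exact ⟨(mem_boundary.1 (show x ∈ boundary G B U by simp [heq])).2.2,
    (mem_boundary.1 (show v ∈ boundary G B U by simp [heq])).2.2⟩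

lemma le_card_neighborsIn (hU : Flap G B x z U v) (h : PathFrame G B x z e k) {u : V}
    (hu : u ∈ U) (hue : u ≠ e) : k ≤ (neighborsIn G B u).card :=
  h.le_card_neighborsIn u (hU.subset hu) (fun h => hU.left_notMem (h ▸ hu))
    (fun h => hU.right_notMem (h ▸ hu)) hue

variable [DecidableEq V]

lemma twoConnectedBetween (hU : Flap G B x z U v) (h2 : TwoConnectedBetween G B x z)
    (hmin : ∀ T ⊆ U, x' ∉ T → ∀ v', ¬ Flap G B x z T v') :
    TwoConnectedBetween G (insert v U) x' v := by
  intro T hT hx' hv hne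
  by_contra! hlt
  have hTU : T ⊆ U := (Finset.subset_insert_iff_of_notMem hv).1 hT
  obtain ⟨v', hv'⟩ := h2.exists_flap (D := insert v U) (hTU.trans hU.subset)
    (fun h => hU.left_notMem (hTU h)) (fun h => hU.right_notMem (hTU h)) hne (by lia) (by
      intro t ht w hw htw
      have := hU.closed t (hTU ht) w hw htw
      simp only [Finset.mem_insert]
      tauto)
  exact hmin T hTU hx' v' hv'

lemma right_mem_componentIn (hU : Flap G B x z U v) (h2 : TwoConnectedBetween G B x z) :
    z ∈ componentIn G (B \ insert x U) v := by
  set R := componentIn G (B \ insert x U) v with hR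
  have hvR : v ∈ R := self_mem_componentIn (by simp [hU.tip_mem, hU.tip_ne, hU.tip_notMem])
  have hRB : R ⊆ B \ insert x U := componentIn_subset
  by_contra hz
  have hxR : x ∉ R := fun h => by simpa using hRB h
  have hle := h2 (R ∪ U) (Finset.union_subset (hRB.trans Finset.sdiff_subset) hU.subset)
    (by simp [hxR, hU.left_notMem]) (by simp [hz, hU.right_notMem]) ⟨v, by simp [hvR]⟩
  have hsub : boundary G B (R ∪ U) ⊆ {x} := by
    intro y hy
    obtain ⟨hyB, hyRU, t, ht, hty⟩ := mem_boundary.1 hy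
    rw [Finset.mem_union, not_or] at hyRU
    rw [Finset.mem_singleton]
    rcases Finset.mem_union.1 ht with ht | ht
    · by_contra hyx
      exact hyRU.1 (mem_componentIn_of_adj ht hty (by simp [hyB, hyx, hyRU.2]))
    · rcases hU.closed t ht y hyB hty with h | rfl | h
      · exact absurd h hyRU.2
      · exact absurd hvR hyRU.1
      · exact h
  have := (hle.trans (Finset.card_le_card hsub)).trans_eq (Finset.card_singleton x)
  lia

lemma exists_pathIn (hU : Flap G B x z U v) (h2 : TwoConnectedBetween G B x z) (hx : x ∈ B)
    (hxx' : G.Adj x x') (hp : PathIn G (insert v U) x' v n) :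
    ∃ m ≥ n + 1, PathIn G B x z m := by
  set R := componentIn G (B \ insert x U) v
  have hRB : R ⊆ B \ insert x U := componentIn_subset
  have hvR : v ∈ R := self_mem_componentIn (by simp [hU.tip_mem, hU.tip_ne, hU.tip_notMem])
  obtain ⟨m, hm⟩ := exists_pathIn_componentIn hvR (hU.right_mem_componentIn h2)
  have hxp : PathIn G (insert x (insert v U)) x v (n + 1) :=
    hp.cons hxx' (by simp [hU.tip_ne.symm, hU.left_notMem])
  refine ⟨n + 1 + m, by lia, (hxp.append hm fun y hy hyR => ?_).mono ?_⟩
  · have := hRB hyR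
    simp only [Finset.mem_sdiff, Finset.mem_insert, not_or] at this hy
    tauto
  · refine Finset.union_subset (Finset.insert_subset hx ?_) (hRB.trans Finset.sdiff_subset)
    exact Finset.insert_subset hU.tip_mem hU.subset

lemma card_neighborsIn_le (hU : Flap G B x z U v) (hx' : x' ∈ U) :
    (neighborsIn G B x').card ≤ (U.erase x').card + 2 := by
  have hsub : neighborsIn G B x' ⊆ U.erase x' ∪ {v, x} := by
    intro w hw
    obtain ⟨hwB, hadj⟩ := mem_neighborsIn.1 hw
    have := hU.closed x' hx' w hwB hadj
    have := hadj.ne'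
    simp only [Finset.mem_union, Finset.mem_erase, Finset.mem_insert, Finset.mem_singleton]
    tauto
  calc _ ≤ _ := Finset.card_le_card hsub
    _ ≤ _ := Finset.card_union_le _ _
    _ ≤ _ := by gcongr; exact Finset.card_le_two

lemma pathFrame (hU : Flap G B x z U v) (h : PathFrame G B x z e (k + 1)) (hx' : x' ∈ U)
    (hmin : ∀ T ⊆ U, x' ∉ T → ∀ v', ¬ Flap G B x z T v')
    (hex : ∃ w ∈ U, w ≠ x' ∧ (3 ≤ k → w ≠ e)) : PathFrame G (insert v U) x' v e k where
  left_mem := by simp [hx']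
  right_mem := by simp
  ne := fun h => hU.tip_notMem (h ▸ hx')
  twoConnected := hU.twoConnectedBetween h.twoConnected hmin
  le_card_neighborsIn u hu _ huv hue := by
    have huU : u ∈ U := (Finset.mem_insert.1 hu).resolve_left huv
    have hsub : neighborsIn G B u ⊆ insert x (neighborsIn G (insert v U) u) := by
      intro w hw
      obtain ⟨hwB, hadj⟩ := mem_neighborsIn.1 hw
      have := hU.closed u huU w hwB hadj
      simp only [Finset.mem_insert, mem_neighborsIn]
      tauto
    have := (Finset.card_le_card hsub).trans (Finset.card_insert_le _ _)
    have := hU.le_card_neighborsIn h huU hue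
    lia
  exists_mem := by
    obtain ⟨w, hw, hwx', hwe⟩ := hex
    exact ⟨w, by simp [hw], hwx', fun h => hU.tip_notMem (h ▸ hw), hwe⟩

end Flap

namespace PathFrame

lemma exists_flap (h : PathFrame G B x z e k) : ∃ U v, Flap G B x z U v := by
  classical
  obtain ⟨u, hu, hux, huz, -⟩ := h.exists_mem
  refine ⟨(B.erase x).erase z, z, (Finset.erase_subset _ _).trans (Finset.erase_subset _ _),
    by simp, by simp, ⟨u, by simp [*]⟩, h.right_mem, by simp, h.ne.symm, fun t _ w hw _ => ?_⟩
  simp only [Finset.mem_erase]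
  tauto

variable [DecidableEq V]

lemma exists_pathFrame_of_flap (h : PathFrame G B x z e (k + 1)) (hk : 2 ≤ k)
    (hflap : ∃ U, ∃ v, Flap G B x z U v ∧ e ∉ U) :
    ∃ U v x', Flap G B x z U v ∧ G.Adj x x' ∧ PathFrame G (insert v U) x' v e k := by
  obtain ⟨U, ⟨v, hU, heU⟩, hmin⟩ := exists_minimal_of_wellFoundedLT _ hflap
  obtain ⟨x', hx', hxx'⟩ := (hU.exists_adj h.twoConnected).1
  have hUe : ∀ w ∈ U, w ≠ e := fun w hw h => heU (h ▸ hw)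
  refine ⟨U, v, x', hU, hxx'.symm, hU.pathFrame h hx' (fun T hT hx'T v' hT' => ?_) ?_⟩
  · exact hx'T (hmin ⟨v', hT', fun he => heU (hT he)⟩ hT hx')
  · have := hU.card_neighborsIn_le hx'
    have := hU.le_card_neighborsIn h hx' (hUe x' hx')
    obtain ⟨w, hw⟩ := Finset.card_pos.1 (show 0 < (U.erase x').card by lia)
    rw [Finset.mem_erase] at hw
    exact ⟨w, hw.2, hw.1, fun _ => hUe w hw.2⟩

lemma exists_pathFrame_of_minimal_flap (h : PathFrame G B x z e (k + 1)) (hk : 2 ≤ k)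
    (he : ∀ U v, Flap G B x z U v → e ∈ U) (hU : Flap G B x z U v)
    (hmin : ∀ T ⊆ U, ∀ v', Flap G B x z T v' → U ⊆ T) (hUe : U ≠ {e}) :
    ∃ x', G.Adj x x' ∧ PathFrame G (insert v U) x' v e k := by
  have heU := he U v hU
  by_cases hxe : G.Adj x e
  · obtain ⟨w, hwU, hwe⟩ : ∃ w ∈ U, w ≠ e := by
      by_contra! hw
      exact hUe (Finset.eq_singleton_iff_unique_mem.2 ⟨heU, hw⟩)
    exact ⟨e, hxe, hU.pathFrame h heU (fun T _ heT v' hT => heT (he T v' hT))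
      ⟨w, hwU, hwe, fun _ => hwe⟩⟩
  · obtain ⟨x', hx', hxx'⟩ := (hU.exists_adj h.twoConnected).1
    have hx'e : x' ≠ e := fun h => hxe (h ▸ hxx'.symm)
    refine ⟨x', hxx'.symm,
      hU.pathFrame h hx' (fun T hT hx'T v' hT' => hx'T (hmin T hT v' hT' hx')) ?_⟩
    have := hU.card_neighborsIn_le hx'
    have := hU.le_card_neighborsIn h hx' hx'e
    by_cases hk3 : 3 ≤ k
    · obtain ⟨w, hw, hwe⟩ := Finset.exists_mem_ne (s := U.erase x') (by lia) e
      rw [Finset.mem_erase] at hw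
      exact ⟨w, hw.2, hw.1, fun _ => hwe⟩
    · exact ⟨e, heU, hx'e.symm, fun h => absurd h hk3⟩

end PathFrame

section SingletonFlap

lemma Flap.tip_ne_right (hs : Flap G B x z {e} v) (he : ∀ U v, Flap G B x z U v → e ∈ U)
    (hex : ∃ w ∈ B, w ≠ x ∧ w ≠ z ∧ w ≠ e) : v ≠ z := by
  classical
  rintro rfl
  obtain ⟨u, hu, hux, huz, hue⟩ := hex
  have hflap : Flap G B x v (((B.erase x).erase v).erase e) v := by
    refine ⟨fun y => by simp, by simp, by simp, ⟨u, by simp [*]⟩, hs.tip_mem, by simp, hs.tip_ne,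
      fun t ht w hw htw => ?_⟩
    simp only [Finset.mem_erase] at ht ⊢
    by_cases hwe : w = e
    · have := hs.closed e (by simp) t ht.2.2.2 (hwe ▸ htw.symm)
      simp only [Finset.mem_singleton] at this
      tauto
    · tauto
  simpa using he _ v hflap

variable [DecidableEq V]

lemma Flap.exists_pathIn_of_singleton (hs : Flap G B x z {e} v) (hx : x ∈ B)
    (h2 : TwoConnectedBetween G B x z) (hp : PathIn G ((B.erase x).erase e) v z n) :
    PathIn G B x z (n + 2) := by
  obtain ⟨⟨t, ht, hex⟩, ⟨t', ht', hev⟩⟩ := hs.exists_adj h2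
  obtain rfl := Finset.mem_singleton.1 ht
  obtain rfl := Finset.mem_singleton.1 ht'
  refine ((hp.cons hev (by simp)).cons hex.symm ?_).mono ?_
  · simp [hex.ne']
  · refine Finset.insert_subset hx (Finset.insert_subset (hs.subset ht) ?_)
    exact (Finset.erase_subset _ _).trans (Finset.erase_subset _ _)

lemma Flap.pathFrame_of_singleton (hs : Flap G B x z {e} v) (h : PathFrame G B x z e (k + 1))
    (he : ∀ U v, Flap G B x z U v → e ∈ U) (hvz : v ≠ z)
    (hex : ∃ w ∈ (B.erase x).erase e, w ≠ v ∧ w ≠ z) :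
    PathFrame G ((B.erase x).erase e) v z e k := by
  have hcl : ∀ w ∈ B, G.Adj e w → w = v ∨ w = x := fun w hw hew =>
    (hs.closed e (by simp) w hw hew).resolve_left (by simpa using hew.ne')
  have hve : v ≠ e := by simpa using hs.tip_notMem
  have hze : z ≠ e := by simpa using hs.right_notMem
  refine ⟨by simp [hs.tip_mem, hs.tip_ne, hve], by simp [h.right_mem, hze, h.ne.symm], hvz,
    fun T hT hvT hzT hne => ?_, fun y hy hyv hyz _ => ?_, ?_⟩
  · have hTB : ∀ t ∈ T, t ≠ e ∧ t ≠ x ∧ t ∈ B := fun t ht => by simpa using hT ht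
    by_contra! hlt
    obtain ⟨v', hv'⟩ := h.twoConnected.exists_flap (fun t ht => (hTB t ht).2.2)
      (fun h => (hTB x h).2.1 rfl) hzT hne (Nat.le_of_lt_succ hlt) (by
        intro t ht w hw htw
        by_cases hwe : w = e
        · rcases hcl t (hTB t ht).2.2 (hwe ▸ htw.symm) with rfl | rfl
          · exact absurd ht hvT
          · exact absurd rfl (hTB _ ht).2.1
        · simp only [Finset.mem_erase]
          tauto)
    exact (hTB e (he T v' hv')).1 rfl
  · simp only [Finset.mem_erase] at hy
    have hsub : neighborsIn G B y ⊆ insert x (neighborsIn G ((B.erase x).erase e) y) := by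
      intro w hw
      obtain ⟨hwB, hyw⟩ := mem_neighborsIn.1 hw
      have : w ≠ e := by
        rintro rfl
        have := hcl y hy.2.2 hyw.symm
        tauto
      simp only [Finset.mem_insert, mem_neighborsIn, Finset.mem_erase]
      tauto
    have := (Finset.card_le_card hsub).trans (Finset.card_insert_le _ _)
    have := h.le_card_neighborsIn y hy.2.2 hy.2.1 hyz hy.1
    lia
  · obtain ⟨w, hw, hwv, hwz⟩ := hex
    exact ⟨w, hw, hwv, hwz, fun _ => Finset.ne_of_mem_erase hw⟩

lemma Flap.adj_of_singleton (hs : Flap G B x z {e} v) (h : PathFrame G B x z e (k + 1))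
    (hk : 2 ≤ k) (hvz : v ≠ z) (hB : ∀ w ∈ (B.erase x).erase e, w ≠ v → w = z) :
    k = 2 ∧ G.Adj v z := by
  have hve : v ≠ e := by simpa using hs.tip_notMem
  have hsub : neighborsIn G B v ⊆ {x, e, z} := by
    intro w hw
    obtain ⟨hwB, hadj⟩ := mem_neighborsIn.1 hw
    have hwz := hB w
    have := hadj.ne'
    simp only [Finset.mem_erase] at hwz
    simp only [Finset.mem_insert, Finset.mem_singleton]
    tauto
  have h3 : ({x, e, z} : Finset V).card ≤ 3 := Finset.card_le_three
  have hdeg := h.le_card_neighborsIn v hs.tip_mem hs.tip_ne hvz hve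
  have heq := Finset.eq_of_subset_of_card_le hsub (by lia)
  rw [heq] at hdeg
  exact ⟨by lia, (mem_neighborsIn.1 (show z ∈ neighborsIn G B v by simp [heq])).2⟩

end SingletonFlap

namespace PathFrame

lemma exists_two_le_pathIn (h : PathFrame G B x z e k) : ∃ n ≥ 2, PathIn G B x z n := by
  classical
  obtain ⟨u, hu, hux, huz, -⟩ := h.exists_mem
  set R := componentIn G (B \ {x, z}) u
  have huR : u ∈ R := self_mem_componentIn (by simp [hu, hux, huz])
  have hRB : R ⊆ B \ {x, z} := componentIn_subset
  have hxR : x ∉ R := fun h => by simpa using hRB h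
  have hzR : z ∉ R := fun h => by simpa using hRB h
  have hsub : boundary G B R ⊆ {x, z} :=
    boundary_componentIn_subset.trans fun y => by simp
  have heq := Finset.eq_of_subset_of_card_le hsub <| Finset.card_le_two.trans <|
    h.twoConnected R (hRB.trans Finset.sdiff_subset) hxR hzR ⟨u, huR⟩
  obtain ⟨-, -, t, ht, htx⟩ := mem_boundary.1 (show x ∈ boundary G B R by simp [heq])
  obtain ⟨-, -, s, hs, hsz⟩ := mem_boundary.1 (show z ∈ boundary G B R by simp [heq])
  obtain ⟨n, hn⟩ := exists_pathIn_componentIn ht hs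
  have hpz := (hn.symm.cons hsz.symm hzR).symm
  refine ⟨n + 1 + 1, by lia, (hpz.cons htx.symm (by simpa [h.ne] using hxR)).mono ?_⟩
  exact Finset.insert_subset h.left_mem
    (Finset.insert_subset h.right_mem (hRB.trans Finset.sdiff_subset))

/-- The long path lemma. In the induction step the problem is pushed into a minimal flap, avoiding
`e` if possible; if the only candidate is `{e}`, the vertices `x` and `e` are split off instead. -/
theorem exists_le_pathIn (h : PathFrame G B x z e k) : ∃ n ≥ k, PathIn G B x z n := by
  classical
  induction k generalizing B x z with
  | zero => exact h.exists_two_le_pathIn.imp fun n hn => ⟨n.zero_le, hn.2⟩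
  | succ k ih =>
  rcases Nat.lt_or_ge k 2 with hk | hk
  · exact h.exists_two_le_pathIn.imp fun n hn => ⟨by lia, hn.2⟩
  by_cases hflap : ∃ U, ∃ v, Flap G B x z U v ∧ e ∉ U
  · obtain ⟨U, v, x', hU, hxx', hframe⟩ := h.exists_pathFrame_of_flap hk hflap
    obtain ⟨n, hn, hp⟩ := ih hframe
    obtain ⟨m, hm, hp'⟩ := hU.exists_pathIn h.twoConnected h.left_mem hxx' hp
    exact ⟨m, by lia, hp'⟩
  push Not at hflap
  obtain ⟨U, ⟨v, hU⟩, hmin⟩ := exists_minimal_of_wellFoundedLT _ h.exists_flap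
  by_cases hUe : U = {e}
  · subst hUe
    obtain ⟨w, hw, hwx, hwz, hwe⟩ := h.exists_mem
    have hvz := hU.tip_ne_right hflap ⟨w, hw, hwx, hwz, hwe (by lia)⟩
    by_cases hex : ∃ w ∈ (B.erase x).erase e, w ≠ v ∧ w ≠ z
    · obtain ⟨n, hn, hp⟩ := ih (hU.pathFrame_of_singleton h hflap hvz hex)
      exact ⟨n + 2, by lia, hU.exists_pathIn_of_singleton h.left_mem h.twoConnected hp⟩
    · push Not at hex
      obtain ⟨rfl, hadj⟩ := hU.adj_of_singleton h hk hvz hex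
      have hve : v ≠ e := by simpa using hU.tip_notMem
      have hze : z ≠ e := by simpa using hU.right_notMem
      refine ⟨3, le_rfl, hU.exists_pathIn_of_singleton h.left_mem h.twoConnected
        ((PathIn.cons hadj (PathIn.nil (Finset.mem_singleton_self z)) (by simpa)).mono ?_)⟩
      simp [Finset.insert_subset_iff, hU.tip_mem, hU.tip_ne, hve, h.right_mem, hze, h.ne.symm]
  · obtain ⟨x', hxx', hframe⟩ := h.exists_pathFrame_of_minimal_flap hk hflap hU
      (fun T hT v' hT' => hmin ⟨v', hT'⟩ hT) hUe
    obtain ⟨n, hn, hp⟩ := ih hframe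
    obtain ⟨m, hm, hp'⟩ := hU.exists_pathIn h.twoConnected h.left_mem hxx' hp
    exact ⟨m, by lia, hp'⟩

end PathFrame

end

/-! ### Longest cycles -/

/-- `σ` permutes `C` cyclically. A cycle of a graph is encoded by its vertex set `C` together with
its successor function `σ`. -/
structure CyclicOrder (σ : Equiv.Perm V) (C : Finset V) : Prop where
  isCycleOn : σ.IsCycleOn (C : Set V)

/-- `σ` runs once around a longest cycle of `G` with vertex set `C`. -/
structure LongestCycle (G : SimpleGraph V) (σ : Equiv.Perm V) (C : Finset V) : Prop
    extends CyclicOrder σ C where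
  adj : ∀ v ∈ C, G.Adj v (σ v)
  three_le : 3 ≤ C.card
  length_le : ∀ (x : V) (D : G.Walk x x), D.IsCycle → D.length ≤ C.card

/-- The arc `σ ^ a p, …, σ ^ b p`. -/
def arc [DecidableEq V] (σ : Equiv.Perm V) (p : V) (a b : ℕ) : Finset V :=
  (Finset.Icc a b).image fun k => (σ ^ k) p

section

variable {G : SimpleGraph V} {σ : Equiv.Perm V} {C D D₁ D₂ : Finset V} {p q : V}
  {a b i j m n L L₁ L₂ : ℕ}

lemma exists_perm_of_isCycle [DecidableEq V] {x : V} {D : G.Walk x x} (hD : D.IsCycle) :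
    ∃ σ : Equiv.Perm V, σ.IsCycleOn (D.support.toFinset : Set V) ∧
      (∀ v ∈ D.support.toFinset, G.Adj v (σ v)) ∧ D.support.toFinset.card = D.length := by
  cases D with
  | nil => exact absurd rfl hD.ne_nil
  | @cons _ v _ h p =>
    have hnd : p.support.Nodup := by simpa using hD.support_nodup
    have hfin : (Walk.cons h p).support.toFinset = p.support.toFinset := by
      simp [p.end_mem_support]
    have hlen : p.support.length = p.length + 1 := p.length_support
    rw [hfin]
    refine ⟨p.support.formPerm, ?_, fun w hw => ?_, ?_⟩
    · rw [List.coe_toFinset]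
      exact hnd.isCycleOn_formPerm
    · rw [List.mem_toFinset] at hw
      obtain ⟨i, hi, rfl⟩ := List.getElem_of_mem hw
      rw [List.formPerm_apply_getElem _ hnd i hi, p.support_getElem_eq_getVert,
        p.support_getElem_eq_getVert]
      obtain rfl | hlt : i = p.length ∨ i < p.length := by lia
      · simpa [hlen] using h
      · rw [Nat.mod_eq_of_lt (by lia)]
        exact p.adj_getVert_succ hlt
    · rw [List.toFinset_card_of_nodup hnd, hlen, Walk.length_cons]

lemma exists_longestCycle [Finite V] (h : ∃ (x : V) (D : G.Walk x x), D.IsCycle) :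
    ∃ (σ : Equiv.Perm V) (C : Finset V), LongestCycle G σ C ∧
      ∃ (x : V) (D : G.Walk x x), D.IsCycle ∧ D.length = C.card ∧ ∀ v, v ∈ D.support ↔ v ∈ C := by
  classical
  have := Fintype.ofFinite V
  let lengths : Set ℕ := {n | ∃ (x : V) (D : G.Walk x x), D.IsCycle ∧ D.length = n}
  have hbdd : BddAbove lengths := by
    refine ⟨Fintype.card V, ?_⟩
    rintro n ⟨x, D, hD, rfl⟩
    obtain ⟨-, -, -, hcard⟩ := exists_perm_of_isCycle hD
    exact hcard ▸ Finset.card_le_univ _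
  obtain ⟨x₀, D₀, hD₀⟩ := h
  obtain ⟨x, D, hD, hmax⟩ := Nat.sSup_mem (s := lengths) ⟨_, x₀, D₀, hD₀, rfl⟩ hbdd
  obtain ⟨σ, hσ, hadj, hcard⟩ := exists_perm_of_isCycle hD
  refine ⟨σ, D.support.toFinset, ⟨⟨hσ⟩, hadj, hcard ▸ hD.three_le_length, fun y E hE => ?_⟩,
    x, D, hD, hcard.symm, by simp⟩
  rw [hcard, hmax]
  exact le_csSup hbdd ⟨y, E, hE, rfl⟩

namespace CyclicOrder

lemma apply_mem_iff (h : CyclicOrder σ C) : σ p ∈ C ↔ p ∈ C := by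
  simpa using h.isCycleOn.apply_mem_iff (x := p)

lemma pow_mem (h : CyclicOrder σ C) (hp : p ∈ C) : ∀ n : ℕ, (σ ^ n) p ∈ C
  | 0 => by simpa using hp
  | n + 1 => by
    rw [pow_succ', Equiv.Perm.mul_apply]
    exact h.apply_mem_iff.2 (h.pow_mem hp n)

lemma pow_card (h : CyclicOrder σ C) (hp : p ∈ C) : (σ ^ C.card) p = p :=
  h.isCycleOn.pow_card_apply hp

lemma exists_pow (h : CyclicOrder σ C) (hp : p ∈ C) (hq : q ∈ C) :
    ∃ n < C.card, (σ ^ n) p = q :=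
  h.isCycleOn.exists_pow_eq hp hq

lemma exists_pow_pos (h : CyclicOrder σ C) (hp : p ∈ C) (hq : q ∈ C) (hpq : p ≠ q) :
    ∃ n, 0 < n ∧ n < C.card ∧ (σ ^ n) p = q := by
  obtain ⟨n, hn, rfl⟩ := h.exists_pow hp hq
  exact ⟨n, Nat.pos_of_ne_zero fun h0 => hpq (by simp [h0]), hn, rfl⟩

lemma pow_eq (h : CyclicOrder σ C) (hp : p ∈ C) (hi : i ≤ C.card) (hj : j ≤ C.card)
    (he : (σ ^ i) p = (σ ^ j) p) : i = j ∨ (i = 0 ∧ j = C.card) ∨ (i = C.card ∧ j = 0) := by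
  have hm : i % C.card = j % C.card := (h.isCycleOn.pow_apply_eq_pow_apply hp).1 he
  rcases hi.lt_or_eq with hi | rfl <;> rcases hj.lt_or_eq with hj | rfl <;>
    simp_all [Nat.mod_eq_of_lt]

lemma pow_inj (h : CyclicOrder σ C) (hp : p ∈ C) (hi : i < C.card) (hj : j < C.card)
    (he : (σ ^ i) p = (σ ^ j) p) : i = j := by
  rcases h.pow_eq hp hi.le hj.le he with h | h | h <;> lia

lemma pow_ne (h : CyclicOrder σ C) (hp : p ∈ C) (hn : 0 < n) (hn' : n < C.card) :
    (σ ^ n) p ≠ p := fun he =>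
  hn.ne' (h.pow_inj hp hn' (hn.trans hn') (by simpa using he))

end CyclicOrder

lemma mem_arc [DecidableEq V] : q ∈ arc σ p a b ↔ ∃ k, a ≤ k ∧ k ≤ b ∧ (σ ^ k) p = q := by
  simp [arc, and_assoc]

namespace CyclicOrder

lemma arc_subset [DecidableEq V] (h : CyclicOrder σ C) (hp : p ∈ C) : arc σ p a b ⊆ C := by
  intro y hy
  obtain ⟨k, -, -, rfl⟩ := mem_arc.1 hy
  exact h.pow_mem hp k

lemma le_of_pow_mem_arc [DecidableEq V] (h : CyclicOrder σ C) (hp : p ∈ C) (hb : b ≤ C.card)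
    (hm : m ≤ C.card) (hmem : (σ ^ m) p ∈ arc σ p a b) :
    (a ≤ m ∧ m ≤ b) ∨ (m = 0 ∧ b = C.card) ∨ (m = C.card ∧ a = 0) := by
  obtain ⟨k, hak, hkb, he⟩ := mem_arc.1 hmem
  rcases h.pow_eq hp (hkb.trans hb) hm he with h | h | h <;> lia

end CyclicOrder

namespace LongestCycle

lemma pathIn_arc [DecidableEq V] (h : LongestCycle G σ C) (hp : p ∈ C) (hn : n < C.card) :
    PathIn G (arc σ p a (a + n)) ((σ ^ a) p) ((σ ^ (a + n)) p) n := by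
  induction n with
  | zero => exact PathIn.nil (mem_arc.2 ⟨a, le_rfl, le_rfl, rfl⟩)
  | succ n ih =>
    have hadj : G.Adj ((σ ^ (a + n)) p) ((σ ^ (a + (n + 1))) p) := by
      rw [← add_assoc, pow_succ' σ (a + n), Equiv.Perm.mul_apply]
      exact h.adj _ (h.pow_mem hp _)
    refine (((ih (by lia)).symm.cons hadj.symm fun hmem => ?_).symm).mono fun y hy => ?_
    · obtain ⟨k, hak, hk, he⟩ := mem_arc.1 hmem
      obtain ⟨d, rfl⟩ := Nat.exists_eq_add_of_le hak
      have := h.pow_inj (i := d) (j := n + 1) (h.pow_mem hp a) (by lia) hn (by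
        rw [← Equiv.Perm.mul_apply, ← Equiv.Perm.mul_apply, ← pow_add, ← pow_add, add_comm d,
          add_comm (n + 1)]
        exact he)
      lia
    · rcases Finset.mem_insert.1 hy with rfl | hy
      · exact mem_arc.2 ⟨_, by lia, le_rfl, rfl⟩
      · obtain ⟨k, hak, hk, he⟩ := mem_arc.1 hy
        exact mem_arc.2 ⟨k, hak, by lia, he⟩

lemma pathIn_arc_of_le [DecidableEq V] (h : LongestCycle G σ C) (hp : p ∈ C) (hab : a ≤ b)
    (hb : b < a + C.card) : PathIn G (arc σ p a b) ((σ ^ a) p) ((σ ^ b) p) (b - a) := by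
  simpa only [Nat.add_sub_of_le hab] using h.pathIn_arc (a := a) (n := b - a) hp (by lia)

lemma pathIn_arc_card [DecidableEq V] (h : LongestCycle G σ C) (hp : p ∈ C) (hn : 0 < n)
    (hn' : n ≤ C.card) : PathIn G (arc σ p n C.card) ((σ ^ n) p) p (C.card - n) := by
  simpa only [h.pow_card hp] using h.pathIn_arc_of_le hp hn' (by lia)

lemma detour_le (h : LongestCycle G σ C) (hp : p ∈ C) (hn : 0 < n) (hn' : n < C.card)
    (hD : PathIn G D p ((σ ^ n) p) L) (hDC : ∀ y ∈ D, y ∈ C → y = p ∨ y = (σ ^ n) p) :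
    L ≤ n := by
  classical
  by_contra! hlt
  have h3 := h.three_le
  obtain ⟨y, K, hK, hl⟩ := hD.exists_isCycle (h.pathIn_arc_card hp hn hn'.le)
    (fun y hy hy' => hDC y hy (h.arc_subset hp hy')) (by lia)
  have := h.length_le y K hK
  lia

lemma crossing_le (h : LongestCycle G σ C) (hp : p ∈ C) (hi : 0 < i) (hin : i ≤ n) (hj : 0 < j)
    (hnj : n + j < C.card) (h₁ : PathIn G D₁ p ((σ ^ n) p) L₁)
    (h₂ : PathIn G D₂ ((σ ^ i) p) ((σ ^ (n + j)) p) L₂)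
    (hC₁ : ∀ y ∈ D₁, y ∈ C → y = p ∨ y = (σ ^ n) p)
    (hC₂ : ∀ y ∈ D₂, y ∈ C → y = (σ ^ i) p ∨ y = (σ ^ (n + j)) p)
    (hd : ∀ y ∈ D₁, y ∉ D₂) : L₁ + L₂ ≤ i + j := by
  classical
  by_contra! hlt
  have h3 := h.three_le
  have p_notMem : p ∉ arc σ p i n := fun hmem => by
    have := h.le_of_pow_mem_arc (m := 0) hp (by lia) (Nat.zero_le _) hmem
    lia
  have pow_mem_arc : ∀ m, m ≤ C.card → (σ ^ m) p ∈ arc σ p (n + j) C.card →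
      m = 0 ∨ n + j ≤ m := fun m hm hmem => by
    have := h.le_of_pow_mem_arc hp le_rfl hm hmem
    lia
  have path₁ := h₁.append (h.pathIn_arc_of_le hp hin (by lia)).symm fun y hy hy' =>
    (hC₁ y hy (h.arc_subset hp hy')).resolve_left fun he => p_notMem (he ▸ hy')
  have path₂ := h₂.append (h.pathIn_arc_card hp (by lia) hnj.le) fun y hy hy' =>
    (hC₂ y hy (h.arc_subset hp hy')).resolve_left fun he => by
      have := pow_mem_arc i (by lia) (he ▸ hy')
      lia
  obtain ⟨y, K, hK, hl⟩ := path₁.exists_isCycle path₂ (fun y hy hy' => by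
    rcases Finset.mem_union.1 hy with hy | hy <;> rcases Finset.mem_union.1 hy' with hy' | hy'
    · exact absurd hy' (hd y hy)
    · refine Or.inl ((hC₁ y hy (h.arc_subset hp hy')).resolve_right fun he => ?_)
      have := pow_mem_arc n (by lia) (he ▸ hy')
      lia
    · refine Or.inr ((hC₂ y hy' (h.arc_subset hp hy)).resolve_right fun he => ?_)
      have := h.le_of_pow_mem_arc hp (by lia) hnj.le (he ▸ hy)
      lia
    · obtain ⟨k, hk, hk', rfl⟩ := mem_arc.1 hy
      have := pow_mem_arc k (by lia) hy'
      lia) (by lia)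
  have := h.length_le y K hK
  lia

end LongestCycle

end

/-! ### Minimum separations -/

/-- `S` is a smallest separating set of `G`, and `A` and `B` are nonempty unions of components of
`G - S` that together cover it. -/
structure MinSeparation (G : SimpleGraph V) (S A B : Finset V) : Prop where
  card_eq : S.card = kappa G
  nonempty_left : A.Nonempty
  nonempty_right : B.Nonempty
  cover : ∀ v, v ∈ A ∨ v ∈ B ∨ v ∈ S
  disj : ∀ v ∈ A, v ∉ B
  disj_left : ∀ v ∈ A, v ∉ S
  disj_right : ∀ v ∈ B, v ∉ S
  not_adj : ∀ a ∈ A, ∀ b ∈ B, ¬ G.Adj a b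

lemma MinSeparation.symm {G : SimpleGraph V} {S A B : Finset V} (h : MinSeparation G S A B) :
    MinSeparation G S B A where
  card_eq := h.card_eq
  nonempty_left := h.nonempty_right
  nonempty_right := h.nonempty_left
  cover v := by have := h.cover v; tauto
  disj v hv hv' := h.disj v hv' hv
  disj_left := h.disj_right
  disj_right := h.disj_left
  not_adj a ha b hb hab := h.not_adj b hb a ha hab.symm

section

variable {G : SimpleGraph V} {T Z : Finset V} {u v x y : V}

lemma kappa_le_of_isCutSet (h : IsCutSet G Z) : kappa G ≤ Z.card :=
  Nat.sInf_le ⟨Z, Set.ncard_coe_finset Z, h⟩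

lemma exists_isCutSet_ncard_eq_kappa : ∃ S : Set V, S.ncard = kappa G ∧ IsCutSet G S :=
  Nat.sInf_mem (s := {k | ∃ S : Set V, S.ncard = k ∧ IsCutSet G S})
    ⟨_, Set.univ, rfl, Or.inr (by simp)⟩

lemma kappa_le_of_separates (hT : T.Nonempty) (hTZ : ∀ t ∈ T, t ∉ Z)
    (hN : ∀ t ∈ T, ∀ w, G.Adj t w → w ∈ T ∨ w ∈ Z) (hvT : v ∉ T) (hvZ : v ∉ Z) :
    kappa G ≤ Z.card := by
  refine kappa_le_of_isCutSet (Or.inl fun hc => ?_)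
  have mem_of_walk : ∀ {a b : ((Z : Set V)ᶜ : Set V)},
      (G.induce (Z : Set V)ᶜ).Walk a b → (a : V) ∈ T → (b : V) ∈ T := by
    intro a b p
    induction p with
    | nil => exact id
    | @cons a c _ hadj _ ih =>
      exact fun ha => ih ((hN _ ha _ hadj).resolve_right fun hZ => c.2 (Finset.mem_coe.2 hZ))
  obtain ⟨t, ht⟩ := hT
  obtain ⟨p⟩ := hc.preconnected ⟨t, by simpa using hTZ t ht⟩ ⟨v, by simpa using hvZ⟩
  exact hvT (mem_of_walk p ht)

lemma kappa_add_two_le [Fintype V] (hxy : x ≠ y) (hadj : ¬ G.Adj x y) :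
    kappa G + 2 ≤ Fintype.card V := by
  classical
  have hle : kappa G ≤ ({x, y}ᶜ : Finset V).card :=
    kappa_le_of_separates (T := {x}) (v := y) (by simp) (by simp) (fun t ht w hw => by
      obtain rfl := Finset.mem_singleton.1 ht
      have : w ≠ y := fun h => hadj (h ▸ hw)
      simp [hw.ne', this]) (by simpa using hxy.symm) (by simp)
  have := Finset.card_add_card_compl ({x, y} : Finset V)
  rw [Finset.card_pair hxy] at this
  lia

lemma kappa_le_degree (G : SimpleGraph V) (v : V) [Fintype (G.neighborSet v)] :
    kappa G ≤ G.degree v := by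
  by_cases h : ∃ w, w ≠ v ∧ ¬ G.Adj v w
  · obtain ⟨w, hw, hvw⟩ := h
    refine kappa_le_of_separates (T := {v}) (v := w) (by simp) (by simp) (fun t ht u hu => ?_)
      (by simpa) (by simpa)
    obtain rfl := Finset.mem_singleton.1 ht
    exact Or.inr ((G.mem_neighborFinset t u).2 hu)
  · push Not at h
    have eq_of_notMem : ∀ a, a ∉ G.neighborFinset v → a = v := fun a ha => by
      by_contra hne
      exact ha ((G.mem_neighborFinset v a).2 (h a hne))
    refine kappa_le_of_isCutSet (Or.inr fun a ha b hb => ?_)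
    rw [eq_of_notMem a (by simpa using ha), eq_of_notMem b (by simpa using hb)]

lemma connected_of_kappa_pos (h : 0 < kappa G) : G.Connected := by
  by_contra hG
  have hcut : IsCutSet G (∅ : Finset V) := Or.inl fun hc => hG <| by
    rw [Finset.coe_empty, Set.compl_empty] at hc
    exact G.induceUnivIso.connected_iff.1 hc
  exact h.ne' (Nat.le_zero.1 (kappa_le_of_isCutSet hcut))

lemma exists_isCycle_of_two_le_kappa [Finite V] (h : 2 ≤ kappa G) :
    ∃ (x : V) (D : G.Walk x x), D.IsCycle := by
  classical
  have := Fintype.ofFinite V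
  by_contra! hacyclic
  have hconn := connected_of_kappa_pos (G := G) (by lia)
  obtain ⟨v⟩ := hconn.nonempty
  obtain ⟨w, hw⟩ := (G.degree_pos_iff_exists_adj v).1 (by have := kappa_le_degree G v; lia)
  have : Nontrivial V := ⟨v, w, hw.ne⟩
  have hleaf := IsTree.minDegree_eq_one_of_nontrivial (G := G) ⟨hconn, hacyclic⟩
  have := G.le_minDegree_of_forall_le_degree _ fun v => kappa_le_degree G v
  lia

lemma exists_notMem_componentIn [Fintype V] [DecidableEq V] {S : Finset V} (hS : IsCutSet G S)
    (hcard : S.card + 2 ≤ Fintype.card V) : ∃ u ∉ S, ∃ v ∉ S, v ∉ componentIn G Sᶜ u := by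
  have hlt : 1 < (Sᶜ).card := by
    have := S.card_add_card_compl
    lia
  obtain ⟨a, ha, b, hb, hab⟩ := Finset.one_lt_card.1 hlt
  rw [Finset.mem_compl] at ha hb
  have hdisc := hS.resolve_right fun hs => hab (hs (by simpa) (by simpa))
  by_contra! hcon
  refine hdisc ((connected_iff _).2 ⟨fun u v => ?_, ⟨⟨a, by simpa⟩⟩⟩)
  obtain ⟨p, hp⟩ := mem_componentIn.1 (hcon u (fun hu => u.2 (Finset.mem_coe.2 hu)) v
    (fun hv => v.2 (Finset.mem_coe.2 hv)))
  exact ⟨p.induce _ fun w hw => by simpa using hp w hw⟩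

lemma exists_minSeparation [Finite V] (hxy : x ≠ y) (hadj : ¬ G.Adj x y) :
    ∃ S A B : Finset V, MinSeparation G S A B := by
  classical
  have := Fintype.ofFinite V
  obtain ⟨S, hcard, hS⟩ := exists_isCutSet_ncard_eq_kappa (G := G)
  obtain ⟨S, rfl⟩ := S.toFinite.exists_finset_coe
  rw [Set.ncard_coe_finset] at hcard
  obtain ⟨u, hu, v, hv, hvu⟩ :=
    exists_notMem_componentIn hS (hcard ▸ kappa_add_two_le hxy hadj)
  have hsub : componentIn G Sᶜ u ⊆ Sᶜ := componentIn_subset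
  refine ⟨S, componentIn G Sᶜ u, Sᶜ \ componentIn G Sᶜ u, hcard,
    ⟨u, self_mem_componentIn (by simpa)⟩, ⟨v, by simp [hv, hvu]⟩, fun w => ?_,
    fun w hw => by simp [hw], fun w hw => by simpa using hsub hw, fun w hw => ?_,
    fun a ha b hb hab => ?_⟩
  · simp only [Finset.mem_sdiff, Finset.mem_compl]
    tauto
  · simp only [Finset.mem_sdiff, Finset.mem_compl] at hw
    exact hw.1
  · rw [Finset.mem_sdiff] at hb
    exact hb.2 (mem_componentIn_of_adj ha hab hb.1)

end

/-! ### Gaps between marked vertices of a cycle -/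

/-- The number of steps from `p` to the next member of `X` in the direction of `σ`. -/
noncomputable def gap (σ : Equiv.Perm V) (X : Finset V) (p : V) : ℕ :=
  sInf {g | 0 < g ∧ (σ ^ g) p ∈ X}

/-- The next member of `X` after `p` in the direction of `σ`. -/
noncomputable def nextIn (σ : Equiv.Perm V) (X : Finset V) (p : V) : V :=
  (σ ^ gap σ X p) p

section

variable {σ : Equiv.Perm V} {C R X Y : Finset V} {p q : V} {a b g l : ℕ}

lemma gap_le (hg : 0 < g) (h : (σ ^ g) p ∈ X) : gap σ X p ≤ g :=
  Nat.sInf_le ⟨hg, h⟩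

lemma eq_of_pow_eq_pow_of_lt_gap (hp : p ∈ X) (hab : a ≤ b) (hb : b < gap σ X q)
    (he : (σ ^ a) p = (σ ^ b) q) : a = b := by
  by_contra hne
  obtain ⟨d, rfl⟩ := Nat.exists_eq_add_of_le hab
  rw [pow_add, Equiv.Perm.mul_apply] at he
  have := gap_le (σ := σ) (X := X) (p := q) (g := d) (by lia) ((σ ^ a).injective he ▸ hp)
  lia

namespace CyclicOrder

lemma gap_pos_and_nextIn_mem (h : CyclicOrder σ C) (hX : X ⊆ C) (hp : p ∈ X) :
    0 < gap σ X p ∧ nextIn σ X p ∈ X :=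
  Nat.sInf_mem (s := {g | 0 < g ∧ (σ ^ g) p ∈ X})
    ⟨C.card, Finset.card_pos.2 ⟨p, hX hp⟩, by rwa [h.pow_card (hX hp)]⟩

lemma gap_pos (h : CyclicOrder σ C) (hX : X ⊆ C) (hp : p ∈ X) : 0 < gap σ X p :=
  (h.gap_pos_and_nextIn_mem hX hp).1

lemma nextIn_mem (h : CyclicOrder σ C) (hX : X ⊆ C) (hp : p ∈ X) : nextIn σ X p ∈ X :=
  (h.gap_pos_and_nextIn_mem hX hp).2

lemma gap_lt_card (h : CyclicOrder σ C) (hX : X ⊆ C) (h2 : 2 ≤ X.card) (hp : p ∈ X) :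
    gap σ X p < C.card := by
  obtain ⟨q, hq, hqp⟩ := Finset.exists_mem_ne (s := X) (by lia) p
  obtain ⟨n, hn, hn', rfl⟩ := h.exists_pow_pos (hX hp) (hX hq) hqp.symm
  exact (gap_le hn hq).trans_lt hn'

lemma subset_of_forall_nextIn_mem (h : CyclicOrder σ C) (hX : X ⊆ C) (hYX : Y ⊆ X)
    (hY : Y.Nonempty) (hnext : ∀ p ∈ Y, nextIn σ X p ∈ Y) : X ⊆ Y := by
  have mem_of_pow_mem : ∀ n : ℕ, ∀ p ∈ Y, (σ ^ n) p ∈ X → (σ ^ n) p ∈ Y := by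
    intro n
    induction n using Nat.strong_induction_on with
    | _ n ih =>
    intro p hp hn
    rcases Nat.eq_zero_or_pos n with rfl | hpos
    · simpa using hp
    · have hgap := h.gap_pos hX (hYX hp)
      have he : (σ ^ n) p = (σ ^ (n - gap σ X p)) (nextIn σ X p) := by
        rw [nextIn, ← Equiv.Perm.mul_apply, ← pow_add, Nat.sub_add_cancel (gap_le hpos hn)]
      rw [he] at hn ⊢
      exact ih _ (by lia) _ (hnext p hp) hn
  obtain ⟨p₀, hp₀⟩ := hY
  intro q hq
  obtain ⟨n, -, rfl⟩ := h.exists_pow (hX (hYX hp₀)) (hX hq)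
  exact mem_of_pow_mem n p₀ hp₀ hq

lemma card_image_le_max [DecidableEq V] (h : CyclicOrder σ C) (hX : X ⊆ C) {f : V → V}
    (hf : ∀ p ∈ X, p ∉ R → f (nextIn σ X p) = f p) : (X.image f).card ≤ max 1 R.card := by
  by_cases hR : X.image f ⊆ R.image f
  · exact (Finset.card_le_card hR).trans (Finset.card_image_le.trans (le_max_right _ _))
  · obtain ⟨y, hy, hqR⟩ := Finset.not_subset.1 hR
    obtain ⟨q, hq, rfl⟩ := Finset.mem_image.1 hy
    have hconst : X ⊆ {p ∈ X | f p = f q} :=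
      h.subset_of_forall_nextIn_mem hX (Finset.filter_subset _ _)
        ⟨q, Finset.mem_filter.2 ⟨hq, rfl⟩⟩ fun p hp => by
          obtain ⟨hp, hpq⟩ := Finset.mem_filter.1 hp
          have hpR : p ∉ R := fun hpR => hqR (hpq ▸ Finset.mem_image_of_mem f hpR)
          exact Finset.mem_filter.2 ⟨h.nextIn_mem hX hp, (hf p hp hpR).trans hpq⟩
    have hsub : X.image f ⊆ {f q} := by
      rw [Finset.image_subset_iff]
      exact fun p hp => Finset.mem_singleton.2 (Finset.mem_filter.1 (hconst hp)).2
    exact (Finset.card_le_card hsub).trans ((Finset.card_singleton _).trans_le (le_max_left _ _))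

lemma sum_gap_le_card (h : CyclicOrder σ C) (hX : X ⊆ C) : ∑ p ∈ X, gap σ X p ≤ C.card := by
  have hcard : (X.sigma fun p => Finset.range (gap σ X p)).card = ∑ p ∈ X, gap σ X p := by
    simp only [Finset.card_sigma, Finset.card_range]
  rw [← hcard]
  refine Finset.card_le_card_of_injOn (fun x => (σ ^ x.2) x.1) ?_ ?_
  · rintro ⟨p, a⟩ hpa
    exact h.pow_mem (hX (Finset.mem_sigma.1 hpa).1) _
  · rintro ⟨p, a⟩ hpa ⟨q, b⟩ hqb he
    simp only [Finset.mem_coe, Finset.mem_sigma, Finset.mem_range] at hpa hqb he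
    obtain rfl : a = b := by
      rcases le_total a b with hab | hba
      · exact eq_of_pow_eq_pow_of_lt_gap hpa.1 hab hqb.2 he
      · exact (eq_of_pow_eq_pow_of_lt_gap hqb.1 hba hpa.2 he.symm).symm
    rw [(σ ^ a).injective he]

lemma two_mul_card_add_mul_card_le (h : CyclicOrder σ C) (hX : X ⊆ C) (hR : R ⊆ X)
    (h2 : ∀ p ∈ X, 2 ≤ gap σ X p) (hl : ∀ p ∈ R, l + 2 ≤ gap σ X p) :
    2 * X.card + l * R.card ≤ C.card := by
  classical
  have hXR : (X \ R).card * 2 ≤ ∑ p ∈ X \ R, gap σ X p :=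
    Finset.card_nsmul_le_sum _ _ _ fun p hp => h2 p (Finset.sdiff_subset hp)
  have hR' : R.card * (l + 2) ≤ ∑ p ∈ R, gap σ X p := Finset.card_nsmul_le_sum _ _ _ hl
  have hsum := Finset.sum_sdiff (f := gap σ X) hR
  have hcard := Finset.card_sdiff_add_card_eq_card hR
  have hle := h.sum_gap_le_card hX
  nlinarith

end CyclicOrder

end

/-! ### Components outside a longest cycle -/

/-- `H` is the vertex set of a component of `G - C`, or `H` is empty. -/
structure OuterComponent (G : SimpleGraph V) (C H : Finset V) : Prop where
  notMem : ∀ v ∈ H, v ∉ C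
  closed : ∀ v ∈ H, ∀ w, G.Adj v w → w ∈ H ∨ w ∈ C
  exists_pathIn : ∀ u ∈ H, ∀ v ∈ H, ∃ n, PathIn G H u v n

open Classical in
/-- The attachments of `Q` on `C`: the vertices of `C` with a neighbour in `Q`. -/
noncomputable def attachments (G : SimpleGraph V) (C Q : Finset V) : Finset V :=
  {p ∈ C | ∃ u ∈ Q, G.Adj p u}

open Classical in
/-- The members `p` of `X` from which one can pass through `H` to the next member of `X`, entering
and leaving `H` at distinct vertices. -/
noncomputable def switches (G : SimpleGraph V) (σ : Equiv.Perm V) (H X : Finset V) : Finset V :=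
  {p ∈ X | ∃ u ∈ neighborsIn G H p, ∃ v ∈ neighborsIn G H (nextIn σ X p), u ≠ v}

section

variable {G : SimpleGraph V} {σ : Equiv.Perm V} {B C H Q R X Z : Finset V} {p q u v w : V}
  {l m n : ℕ}

lemma PathIn.link [DecidableEq V] (hm : PathIn G H u v m) (hpu : G.Adj p u) (hvq : G.Adj v q)
    (hp : p ∉ H) (hq : q ∉ H) (hpq : p ≠ q) :
    PathIn G (insert p (insert q H)) p q (m + 2) :=
  (hm.symm.cons hvq.symm hq).symm.cons hpu (by simp [hpq, hp])

lemma LongestCycle.add_two_le_of_pathIn (h : LongestCycle G σ C) (hH : ∀ v ∈ H, v ∉ C)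
    (hp : p ∈ C) (hn : 0 < n) (hn' : n < C.card) (hm : PathIn G H u v m) (hpu : G.Adj p u)
    (hvq : G.Adj v ((σ ^ n) p)) : m + 2 ≤ n := by
  classical
  refine h.detour_le hp hn hn' (hm.link hpu hvq (fun hpH => hH _ hpH hp)
    (fun hqH => hH _ hqH (h.pow_mem hp n)) (h.pow_ne hp hn hn').symm) fun y hy hyC => ?_
  simp only [Finset.mem_insert] at hy
  rcases hy with hy | hy | hy
  · exact Or.inl hy
  · exact Or.inr hy
  · exact absurd hyC (hH y hy)

lemma mem_attachments : p ∈ attachments G C Q ↔ p ∈ C ∧ ∃ u ∈ Q, G.Adj p u := by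
  simp [attachments]

lemma attachments_subset : attachments G C Q ⊆ C := by
  classical exact Finset.filter_subset _ _

lemma neighborsIn_subset_attachments (hv : v ∈ Q) : neighborsIn G C v ⊆ attachments G C Q :=
  fun _ hw => mem_attachments.2
    ⟨(mem_neighborsIn.1 hw).1, v, hv, (mem_neighborsIn.1 hw).2.symm⟩

lemma switches_subset : switches G σ H X ⊆ X := by
  classical exact Finset.filter_subset _ _

lemma mem_switches : p ∈ switches G σ H X ↔
    p ∈ X ∧ ∃ u ∈ neighborsIn G H p, ∃ v ∈ neighborsIn G H (nextIn σ X p), u ≠ v := by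
  simp [switches]

lemma card_neighborsIn_lt (hv : v ∈ B) : (neighborsIn G B v).card < B.card :=
  Finset.card_lt_card ⟨fun _ hw => (mem_neighborsIn.1 hw).1,
    fun h => (mem_neighborsIn.1 (h hv)).2.ne rfl⟩

namespace OuterComponent

lemma componentIn_compl [Fintype V] [DecidableEq V] (u : V) :
    OuterComponent G C (componentIn G Cᶜ u) where
  notMem v hv := by simpa using componentIn_subset hv
  closed v hv w hvw := by
    by_cases hw : w ∈ C
    · exact Or.inr hw
    · exact Or.inl (mem_componentIn_of_adj hv hvw (by simpa))
  exists_pathIn _ hv _ hw := exists_pathIn_componentIn hv hw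

lemma degree_le_card_add_card (hH : OuterComponent G C H) (hv : v ∈ H)
    [Fintype (G.neighborSet v)] :
    G.degree v ≤ (neighborsIn G H v).card + (neighborsIn G C v).card := by
  classical
  refine (Finset.card_le_card fun w hw => ?_).trans (Finset.card_union_le _ _)
  have hvw := (G.mem_neighborFinset v w).1 hw
  simp only [Finset.mem_union, mem_neighborsIn]
  exact (hH.closed v hv w hvw).imp (⟨·, hvw⟩) (⟨·, hvw⟩)

lemma boundary_nonempty (hH : OuterComponent G C H) (hQ : Q ⊆ H) (hne : Q.Nonempty) (hv : v ∈ H)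
    (hvQ : v ∉ Q) : (boundary G H Q).Nonempty := by
  have of_walk : ∀ {a b : V} (w : G.Walk a b), (∀ y ∈ w.support, y ∈ H) → a ∈ Q → b ∉ Q →
      (boundary G H Q).Nonempty := by
    intro a b w
    induction w with
    | nil => exact fun _ h h' => absurd h h'
    | @cons a c b hac w ih =>
      intro hs ha hb
      by_cases hc : c ∈ Q
      · exact ih (fun y hy => hs y (by simp [hy])) hc hb
      · exact ⟨c, mem_boundary.2 ⟨hs c (by simp), hc, a, ha, hac⟩⟩
  obtain ⟨u, hu⟩ := hne
  obtain ⟨n, w, -, -, hw⟩ := hH.exists_pathIn u (hQ hu) v hv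
  exact of_walk w hw hu hvQ

lemma kappa_le_card_boundary_add (hH : OuterComponent G C H) (hQ : Q ⊆ H) (hne : Q.Nonempty)
    (hv : v ∉ Q) (hvb : v ∉ boundary G H Q) (hva : v ∉ attachments G C Q) :
    kappa G ≤ (boundary G H Q).card + (attachments G C Q).card := by
  classical
  refine (kappa_le_of_separates (T := Q) (Z := boundary G H Q ∪ attachments G C Q) hne
    (fun t ht h => ?_) (fun t ht w hw => ?_) hv (by simp [hvb, hva])).trans
    (Finset.card_union_le _ _)
  · rcases Finset.mem_union.1 h with h | h
    · exact (mem_boundary.1 h).2.1 ht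
    · exact hH.notMem t (hQ ht) (mem_attachments.1 h).1
  · rw [Finset.mem_union, or_iff_not_imp_left]
    exact fun hwQ => (hH.closed t (hQ ht) w hw).imp
      (fun h => mem_boundary.2 ⟨h, hwQ, t, ht, hw⟩)
      (fun h => mem_attachments.2 ⟨h, t, ht, hw.symm⟩)

lemma kappa_le_card_of_cover (hH : OuterComponent G C H) (hZH : Z.card < H.card)
    (hZC : Z.card < C.card) (hcov : ∀ t ∈ H, ∀ p ∈ C, G.Adj p t → t ∈ Z ∨ p ∈ Z) :
    kappa G ≤ Z.card := by
  classical
  obtain ⟨t, ht, htZ⟩ := Finset.exists_mem_notMem_of_card_lt_card hZH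
  obtain ⟨v, hv, hvZ⟩ := Finset.exists_mem_notMem_of_card_lt_card hZC
  refine kappa_le_of_separates (T := H \ Z) (v := v) ⟨t, by simp [ht, htZ]⟩ (by simp)
    (fun s hs w hw => ?_) (fun hvT => hH.notMem v (Finset.mem_sdiff.1 hvT).1 hv) hvZ
  rw [Finset.mem_sdiff] at hs ⊢
  have hwC : w ∈ C → w ∈ Z := fun hwC => (hcov s hs.1 w hwC hw.symm).resolve_left hs.2
  have := hH.closed s hs.1 w hw
  tauto

end OuterComponent

namespace LongestCycle

lemma apply_notMem_attachments (h : LongestCycle G σ C) (hH : OuterComponent G C H)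
    (hp : p ∈ attachments G C H) : σ p ∉ attachments G C H := by
  intro hσ
  obtain ⟨hpC, u, hu, hpu⟩ := mem_attachments.1 hp
  obtain ⟨-, v, hv, hqv⟩ := mem_attachments.1 hσ
  obtain ⟨m, hm⟩ := hH.exists_pathIn u hu v hv
  have h3 := h.three_le
  have := h.add_two_le_of_pathIn hH.notMem hpC (n := 1) (by lia) (by lia) hm hpu
    (by simpa using hqv.symm)
  lia

lemma kappa_le_card_attachments (h : LongestCycle G σ C) (hH : OuterComponent G C H)
    (hne : H.Nonempty) : kappa G ≤ (attachments G C H).card := by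
  have hbd : boundary G H H = ∅ :=
    Finset.eq_empty_of_forall_notMem fun w hw => (mem_boundary.1 hw).2.1 (mem_boundary.1 hw).1
  obtain ⟨v, hvC, hv⟩ : ∃ v ∈ C, v ∉ attachments G C H := by
    obtain ⟨p, hp⟩ := Finset.card_pos.1 (zero_lt_three.trans_le h.three_le)
    by_cases hpX : p ∈ attachments G C H
    · exact ⟨σ p, h.apply_mem_iff.2 hp, h.apply_notMem_attachments hH hpX⟩
    · exact ⟨p, hp, hpX⟩
  have := hH.kappa_le_card_boundary_add Finset.Subset.rfl hne (fun hvH => hH.notMem v hvH hvC)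
    (by simp [hbd]) hv
  simpa [hbd] using this

lemma two_mul_card_add_le_of_pathIn (h : LongestCycle G σ C) (hH : OuterComponent G C H)
    (hX : X ⊆ attachments G C H) (h2 : 2 ≤ X.card) (hR : R ⊆ X)
    (hl : ∀ p ∈ R, ∃ u v m, G.Adj p u ∧ G.Adj v (nextIn σ X p) ∧ l ≤ m ∧ PathIn G H u v m) :
    2 * X.card + l * R.card ≤ C.card := by
  have hXC := hX.trans attachments_subset
  have le_gap : ∀ p ∈ X, ∀ u v m, G.Adj p u → G.Adj v (nextIn σ X p) → PathIn G H u v m →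
      m + 2 ≤ gap σ X p := fun p hp u v m hpu hvq hm =>
    h.add_two_le_of_pathIn hH.notMem (hXC hp) (h.gap_pos hXC hp) (h.gap_lt_card hXC h2 hp)
      hm hpu hvq
  refine h.two_mul_card_add_mul_card_le hXC hR (fun p hp => ?_) fun p hp => ?_
  · obtain ⟨-, u, hu, hpu⟩ := mem_attachments.1 (hX hp)
    obtain ⟨-, v, hv, hqv⟩ := mem_attachments.1 (hX (h.nextIn_mem hXC hp))
    obtain ⟨m, hm⟩ := hH.exists_pathIn u hu v hv
    have := le_gap p hp u v m hpu hqv.symm hm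
    lia
  · obtain ⟨u, v, m, hpu, hvq, hlm, hm⟩ := hl p hp
    have := le_gap p (hR hp) u v m hpu hvq hm
    lia

lemma exists_neighborsIn_eq_singleton (h : LongestCycle G σ C)
    (hp : p ∈ attachments G C H) (hpR : p ∉ switches G σ H (attachments G C H)) :
    ∃ u, neighborsIn G H p = {u} ∧
      neighborsIn G H (nextIn σ (attachments G C H) p) = {u} := by
  obtain ⟨-, u, hu, hpu⟩ := mem_attachments.1 hp
  obtain ⟨-, v, hv, hqv⟩ := mem_attachments.1 (h.nextIn_mem attachments_subset hp)
  have heq : ∀ a ∈ neighborsIn G H p, ∀ b ∈ neighborsIn G H (nextIn σ (attachments G C H) p),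
      a = b := by
    simpa only [mem_switches, hp, true_and, not_exists, not_and, not_not] using hpR
  have hu' := mem_neighborsIn.2 ⟨hu, hpu⟩
  have hv' := mem_neighborsIn.2 ⟨hv, hqv⟩
  obtain rfl := heq u hu' v hv'
  exact ⟨u, Finset.eq_singleton_iff_unique_mem.2 ⟨hu', fun w hw => heq w hw u hv'⟩,
    Finset.eq_singleton_iff_unique_mem.2 ⟨hv', fun w hw => (heq u hu' w hw).symm⟩⟩

/-- Replacing each attachment that has a unique neighbour in `H` by that neighbour gives a cover
of the edges between `H` and `C`. This replacement is constant along the attachments except at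
switches, so the cover is small. -/
lemma kappa_le_max_card_switches (h : LongestCycle G σ C) (hH : OuterComponent G C H)
    (hRH : max 1 (switches G σ H (attachments G C H)).card < H.card)
    (hRC : max 1 (switches G σ H (attachments G C H)).card < C.card) :
    kappa G ≤ max 1 (switches G σ H (attachments G C H)).card := by
  classical
  have exists_anchor : ∀ p, ∃ w, (∀ u, neighborsIn G H p = {u} → w = u) ∧
      ((∀ u, neighborsIn G H p ≠ {u}) → w = p) := fun p => by
    by_cases hp : ∃ u, neighborsIn G H p = {u}
    · obtain ⟨u, hu⟩ := hp
      exact ⟨u, fun v hv => Finset.singleton_injective (hu.symm.trans hv),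
        fun hno => absurd hu (hno u)⟩
    · push Not at hp
      exact ⟨p, fun u hu => absurd hu (hp u), fun _ => rfl⟩
  choose anchor anchor_eq anchor_self using exists_anchor
  have hcard := h.card_image_le_max attachments_subset (f := anchor) fun p hp hpR => by
    obtain ⟨u, hu, hu'⟩ := h.exists_neighborsIn_eq_singleton hp hpR
    rw [anchor_eq _ u hu, anchor_eq _ u hu']
  refine (hH.kappa_le_card_of_cover (hcard.trans_lt hRH) (hcard.trans_lt hRC)
    fun t ht p hp hpt => ?_).trans hcard
  have hpX := Finset.mem_image_of_mem anchor (mem_attachments.2 ⟨hp, t, ht, hpt⟩)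
  by_cases hex : ∃ u, neighborsIn G H p = {u}
  · obtain ⟨u, hu⟩ := hex
    have htu : t ∈ ({u} : Finset V) := hu ▸ mem_neighborsIn.2 ⟨ht, hpt⟩
    rw [anchor_eq p u hu, ← Finset.mem_singleton.1 htu] at hpX
    exact Or.inl hpX
  · push Not at hex
    exact Or.inr (anchor_self p hex ▸ hpX)

end LongestCycle

end

/-! ### Two-connected components -/

section

variable {G : SimpleGraph V} {σ : Equiv.Perm V} {C H : Finset V} {y y₁ y₂ : V} {c l q r : ℕ}

lemma two_mul_add_mul_le (hl : 2 ≤ l) (hq : q ≤ r) (hc : c ≤ r) :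
    2 * q + c * l ≤ l * r + 2 * c := by
  obtain ⟨k, rfl⟩ := Nat.exists_eq_add_of_le hl
  obtain ⟨s, rfl⟩ := Nat.exists_eq_add_of_le hc
  nlinarith [Nat.zero_le (k * s)]

lemma two_le_card_neighborsIn (hH3 : 3 ≤ H.card)
    (h2 : ∀ x ∈ H, ∀ z ∈ H, x ≠ z → TwoConnectedBetween G H x z) (hy : y ∈ H) :
    2 ≤ (neighborsIn G H y).card := by
  classical
  obtain ⟨x, hx, hxy⟩ := Finset.exists_mem_ne (s := H) (by lia) y
  obtain ⟨z, hz, hzs⟩ := Finset.exists_mem_notMem_of_card_lt_card (s := {x, y}) (t := H)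
    (Finset.card_le_two.trans_lt hH3)
  simp only [Finset.mem_insert, Finset.mem_singleton, not_or] at hzs
  refine (h2 x hx z hz (Ne.symm hzs.1) {y} (by simpa) (by simpa) (by simpa using hzs.2)
    (by simp)).trans (Finset.card_le_card fun w hw => ?_)
  obtain ⟨hwH, -, t, ht, htw⟩ := mem_boundary.1 hw
  obtain rfl := Finset.mem_singleton.1 ht
  exact mem_neighborsIn.2 ⟨hwH, htw⟩

/-- `y₁` and `y₂` have the two smallest degrees in `G[H]`; `y₁` is the exceptional vertex of the
long path lemma. -/
lemma exists_pair_le_pathIn (hH3 : 3 ≤ H.card)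
    (h2 : ∀ x ∈ H, ∀ z ∈ H, x ≠ z → TwoConnectedBetween G H x z) :
    ∃ y₁ ∈ H, ∃ y₂ ∈ H, y₁ ≠ y₂ ∧ (neighborsIn G H y₁).card ≤ (neighborsIn G H y₂).card ∧
      ∀ x ∈ H, ∀ z ∈ H, x ≠ z → ∃ m ≥ (neighborsIn G H y₂).card, PathIn G H x z m := by
  classical
  obtain ⟨y₁, hy₁, hmin₁⟩ := H.exists_min_image (fun v => (neighborsIn G H v).card)
    (Finset.card_pos.1 (by lia))
  obtain ⟨y₂, hy₂, hmin₂⟩ := (H.erase y₁).exists_min_image (fun v => (neighborsIn G H v).card)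
    (Finset.card_pos.1 (by rw [Finset.card_erase_of_mem hy₁]; lia))
  rw [Finset.mem_erase] at hy₂
  have hlt := card_neighborsIn_lt (G := G) hy₂.2
  refine ⟨y₁, hy₁, y₂, hy₂.2, hy₂.1.symm, hmin₁ y₂ hy₂.2, fun x hx z hz hxz => ?_⟩
  refine PathFrame.exists_le_pathIn (e := y₁) ⟨hx, hz, hxz, h2 x hx z hz hxz,
    fun v hv _ _ hvy => hmin₂ v (Finset.mem_erase.2 ⟨hvy, hv⟩), ?_⟩
  by_cases h3 : 3 ≤ (neighborsIn G H y₂).card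
  · obtain ⟨v, hv, hvs⟩ := Finset.exists_mem_notMem_of_card_lt_card (s := {x, z, y₁}) (t := H)
      (Finset.card_le_three.trans_lt (by lia))
    simp only [Finset.mem_insert, Finset.mem_singleton, not_or] at hvs
    exact ⟨v, hv, hvs.1, hvs.2.1, fun _ => hvs.2.2⟩
  · obtain ⟨v, hv, hvs⟩ := Finset.exists_mem_notMem_of_card_lt_card (s := {x, z}) (t := H)
      (Finset.card_le_two.trans_lt hH3)
    simp only [Finset.mem_insert, Finset.mem_singleton, not_or] at hvs
    exact ⟨v, hv, hvs.1, hvs.2, fun h => absurd h h3⟩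

namespace LongestCycle

lemma two_mul_card_attachments_add_le (h : LongestCycle G σ C) (hH : OuterComponent G C H)
    (hX : 2 ≤ (attachments G C H).card)
    (hlong : ∀ x ∈ H, ∀ z ∈ H, x ≠ z → ∃ m ≥ l, PathIn G H x z m) :
    2 * (attachments G C H).card + l * (switches G σ H (attachments G C H)).card ≤ C.card := by
  refine h.two_mul_card_add_le_of_pathIn hH Finset.Subset.rfl hX switches_subset fun p hp => ?_
  obtain ⟨-, u, hu, v, hv, huv⟩ := mem_switches.1 hp
  rw [mem_neighborsIn] at hu hv
  obtain ⟨m, hm, hpath⟩ := hlong u hu.1 v hv.1 huv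
  exact ⟨u, v, m, hu.2, hv.2.symm, hm, hpath⟩

lemma neighborsIn_inter_subset_switches [DecidableEq V] (h : LongestCycle G σ C) (hy₁ : y₁ ∈ H)
    (hy₂ : y₂ ∈ H) (hne : y₁ ≠ y₂) :
    neighborsIn G C y₁ ∩ neighborsIn G C y₂ ⊆ switches G σ H (attachments G C H) := by
  intro w hw
  rw [Finset.mem_inter] at hw
  have hwX := neighborsIn_subset_attachments hy₁ hw.1
  obtain ⟨-, v, hv, hqv⟩ := mem_attachments.1 (h.nextIn_mem attachments_subset hwX)
  have mem_H : ∀ y ∈ H, w ∈ neighborsIn G C y → y ∈ neighborsIn G H w := fun y hy hwy =>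
    mem_neighborsIn.2 ⟨hy, (mem_neighborsIn.1 hwy).2.symm⟩
  have hv' := mem_neighborsIn.2 ⟨hv, hqv⟩
  by_cases hvy : y₁ = v
  · exact mem_switches.2 ⟨hwX, y₂, mem_H y₂ hy₂ hw.2, v, hv', hvy ▸ hne.symm⟩
  · exact mem_switches.2 ⟨hwX, y₁, mem_H y₁ hy₁ hw.1, v, hv', hvy⟩

lemma four_mul_minDegree_le_of_twoConnected [Fintype V] [DecidableRel G.Adj]
    (h : LongestCycle G σ C) (hH : OuterComponent G C H) (h4 : 4 ≤ kappa G) (hH3 : 3 ≤ H.card)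
    (h2 : ∀ x ∈ H, ∀ z ∈ H, x ≠ z → TwoConnectedBetween G H x z) :
    4 * G.minDegree ≤ C.card + 8 := by
  classical
  obtain ⟨y₁, hy₁, y₂, hy₂, hne, hle, hlong⟩ := exists_pair_le_pathIn hH3 h2
  have hX := h.kappa_le_card_attachments hH ⟨y₁, hy₁⟩
  have hcount := h.two_mul_card_attachments_add_le hH (by lia) hlong
  have hinter := Finset.card_le_card (h.neighborsIn_inter_subset_switches hy₁ hy₂ hne)
  have hunion := Finset.card_le_card (Finset.union_subset
    (neighborsIn_subset_attachments (G := G) (C := C) hy₁) (neighborsIn_subset_attachments hy₂))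
  have hadd := Finset.card_union_add_card_inter (neighborsIn G C y₁) (neighborsIn G C y₂)
  have hd₁ := (G.minDegree_le_degree y₁).trans (hH.degree_le_card_add_card hy₁)
  have hd₂ := (G.minDegree_le_degree y₂).trans (hH.degree_le_card_add_card hy₂)
  have hl := two_le_card_neighborsIn hH3 h2 hy₂
  have hlt := card_neighborsIn_lt (G := G) hy₂
  rcases Nat.lt_or_ge H.card 4 with hH4 | hH4
  · have hl2 : (neighborsIn G H y₂).card = 2 := by lia
    rw [hl2] at hcount
    lia
  · have hR : 4 ≤ (switches G σ H (attachments G C H)).card := by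
      by_contra hR
      have := Finset.card_le_card (attachments_subset (G := G) (C := C) (Q := H))
      have := h.kappa_le_max_card_switches hH (by lia) (by lia)
      lia
    have := two_mul_add_mul_le hl hinter hR
    lia

end LongestCycle

end

/-! ### Components with a cut vertex -/

open Classical in
/-- `Q` is an end block of `G[H]` without its cut vertex `b`; every vertex of `Q` is joined to `b`
through `Q` by a path at least as long as the degree of `w` in `G[H]`. -/
structure EndBlock (G : SimpleGraph V) (H Q : Finset V) (b w : V) : Prop where
  subset : Q ⊆ H
  boundary_eq : boundary G H Q = {b}
  mem : w ∈ Q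
  exists_pathIn : ∀ u ∈ Q, ∃ n ≥ (neighborsIn G H w).card, PathIn G (insert b Q) u b n

/-- Two end blocks of `G[H]`, neither of which contains the cut vertex of the other. -/
structure EndBlockPair (G : SimpleGraph V) (H Q₁ Q₂ : Finset V) (b₁ b₂ w₁ w₂ : V) : Prop where
  left : EndBlock G H Q₁ b₁ w₁
  right : EndBlock G H Q₂ b₂ w₂
  disjoint : ∀ y ∈ Q₁, y ∉ Q₂
  left_cut_notMem : b₁ ∉ Q₂
  right_cut_notMem : b₂ ∉ Q₁

/-- The vertices of `X ∪ Y` from which the step to the next member of `X ∪ Y` leads from `X` to `Y`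
or from `Y` to `X`. -/
noncomputable def crossings [DecidableEq V] (σ : Equiv.Perm V) (X Y : Finset V) : Finset V :=
  {p ∈ X ∪ Y | p ∈ X ∧ nextIn σ (X ∪ Y) p ∈ Y ∨ p ∈ Y ∧ nextIn σ (X ∪ Y) p ∈ X}

section

variable {G : SimpleGraph V} {σ : Equiv.Perm V} {C H Q Q₁ Q₂ T X Y : Finset V}
  {b b₁ b₂ p u w w₁ w₂ x y z : V}

lemma mem_insert_of_boundary_eq [DecidableEq V] (hb : boundary G H Q = {b}) (hu : u ∈ Q)
    (hy : y ∈ H) (huy : G.Adj u y) : y ∈ insert b Q := by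
  rw [Finset.mem_insert, or_iff_not_imp_right]
  intro hyQ
  have hmem : y ∈ boundary G H Q := mem_boundary.2 ⟨hy, hyQ, u, hu, huy⟩
  rwa [hb, Finset.mem_singleton] at hmem

lemma twoConnectedBetween_of_minimal [DecidableEq V] (hb : boundary G H Q = {b})
    (hmin : ∀ S ⊆ Q, S.Nonempty → (boundary G H S).card ≤ 1 → Q ⊆ S) (hu : u ∈ Q) :
    TwoConnectedBetween G (insert b Q) u b := by
  intro S hS huS hbS hSne
  by_contra hlt
  have hSQ : S ⊆ Q := (Finset.subset_insert_iff_of_notMem hbS).1 hS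
  have hsub : boundary G H S ⊆ boundary G (insert b Q) S := fun y hy => by
    obtain ⟨hyH, hyS, s, hs, hsy⟩ := mem_boundary.1 hy
    exact mem_boundary.2 ⟨mem_insert_of_boundary_eq hb (hSQ hs) hyH hsy, hyS, s, hs, hsy⟩
  have hcard := Finset.card_le_card hsub
  exact huS (hmin S hSQ hSne (by lia) hu)

lemma exists_le_pathIn_of_minimal [DecidableEq V] (hb : boundary G H Q = {b})
    (hmin : ∀ S ⊆ Q, S.Nonempty → (boundary G H S).card ≤ 1 → Q ⊆ S) (hw : w ∈ Q)
    (hdeg : ∀ v ∈ Q, (neighborsIn G H w).card ≤ (neighborsIn G H v).card) (hu : u ∈ Q) :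
    ∃ n ≥ (neighborsIn G H w).card, PathIn G (insert b Q) u b n := by
  obtain ⟨-, hbQ, t, ht, htb⟩ := mem_boundary.1 (hb ▸ Finset.mem_singleton_self b)
  have ne_cut : ∀ v ∈ Q, v ≠ b := fun v hv h => hbQ (h ▸ hv)
  by_cases hQu : ∃ v ∈ Q, v ≠ u
  · obtain ⟨v, hv, hvu⟩ := hQu
    refine PathFrame.exists_le_pathIn (e := b) ⟨by simp [hu], by simp, ne_cut u hu,
      twoConnectedBetween_of_minimal hb hmin hu, fun v hv _ hvb _ => ?_,
      v, by simp [hv], hvu, ne_cut v hv, fun _ => ne_cut v hv⟩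
    have hvQ := (Finset.mem_insert.1 hv).resolve_left hvb
    refine (hdeg v hvQ).trans (Finset.card_le_card fun y hy => ?_)
    obtain ⟨hyH, hvy⟩ := mem_neighborsIn.1 hy
    exact mem_neighborsIn.2 ⟨mem_insert_of_boundary_eq hb hvQ hyH hvy, hvy⟩
  · push Not at hQu
    obtain rfl := hQu w hw
    obtain rfl := hQu t ht
    refine ⟨1, ?_, (PathIn.cons htb (PathIn.nil (Finset.mem_singleton_self b))
      (by simpa using htb.ne)).mono (by simp [Finset.insert_subset_iff, ht])⟩
    refine (Finset.card_le_card fun y hy => ?_).trans (Finset.card_singleton b).le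
    obtain ⟨hyH, hty⟩ := mem_neighborsIn.1 hy
    rw [Finset.mem_singleton]
    exact (Finset.mem_insert.1 (mem_insert_of_boundary_eq hb ht hyH hty)).resolve_right
      fun hyQ => hty.ne' (hQu y hyQ)

namespace OuterComponent

lemma exists_endBlock (hH : OuterComponent G C H) (hT : T ⊆ H) (hne : T.Nonempty) (hx : x ∈ H)
    (hxT : x ∉ T) (hbd : (boundary G H T).card ≤ 1) : ∃ Q ⊆ T, ∃ b w, EndBlock G H Q b w := by
  classical
  obtain ⟨Q, ⟨hQT, hQne, hQbd⟩, hmin⟩ := exists_minimal_of_wellFoundedLT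
    (fun Q => Q ⊆ T ∧ Q.Nonempty ∧ (boundary G H Q).card ≤ 1) ⟨T, Finset.Subset.rfl, hne, hbd⟩
  obtain ⟨b, hb⟩ := Finset.card_eq_one.1 <| hQbd.antisymm <| Finset.card_pos.2 <|
    hH.boundary_nonempty (hQT.trans hT) hQne hx fun h => hxT (hQT h)
  obtain ⟨w, hw, hdeg⟩ := Q.exists_min_image (fun v => (neighborsIn G H v).card) hQne
  exact ⟨Q, hQT, b, w, hQT.trans hT, hb, hw, fun u => exists_le_pathIn_of_minimal hb
    (fun S hS hSne hSbd => hmin ⟨hS.trans hQT, hSne, hSbd⟩ hS) hw hdeg⟩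

lemma exists_separation_of_not_twoConnectedBetween (hx : x ∈ H) (hz : z ∈ H)
    (hxz : x ≠ z) (h2 : ¬ TwoConnectedBetween G H x z) :
    ∃ T₁ ⊆ H, ∃ T₂ ⊆ H, T₁.Nonempty ∧ T₂.Nonempty ∧ (∀ t ∈ T₁, t ∉ T₂) ∧
      (∀ t ∈ T₁, ∀ s ∈ T₂, ¬ G.Adj t s) ∧ (boundary G H T₁).card ≤ 1 ∧
      (boundary G H T₂).card ≤ 1 := by
  classical
  unfold TwoConnectedBetween at h2
  push Not at h2
  obtain ⟨T, hT, hxT, hzT, hne, hlt⟩ := h2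
  have hbd : (boundary G H T).card ≤ 1 := by lia
  have not_adj : ∀ t ∈ T, ∀ s ∈ (H \ T) \ boundary G H T, ¬ G.Adj t s := fun t ht s hs hts => by
    simp only [Finset.mem_sdiff] at hs
    exact hs.2 (mem_boundary.2 ⟨hs.1.1, hs.1.2, t, ht, hts⟩)
  refine ⟨T, hT, (H \ T) \ boundary G H T, Finset.sdiff_subset.trans Finset.sdiff_subset, hne, ?_,
    fun t ht => by simp [ht], not_adj, hbd, (Finset.card_le_card fun y hy => ?_).trans hbd⟩
  · by_cases hxb : x ∈ boundary G H T
    · have hzb : z ∉ boundary G H T := fun hzb => hxz (Finset.card_le_one.1 hbd x hxb z hzb)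
      exact ⟨z, by simp [hz, hzT, hzb]⟩
    · exact ⟨x, by simp [hx, hxT, hxb]⟩
  · obtain ⟨hyH, hyT₂, t, ht, hty⟩ := mem_boundary.1 hy
    by_contra hyb
    have hyT : y ∈ T := by
      by_contra hyT
      exact hyT₂ (by simp [hyH, hyT, hyb])
    exact not_adj y hyT t ht hty.symm

end OuterComponent

namespace EndBlock

lemma cut_mem_boundary (h : EndBlock G H Q b w) : b ∈ boundary G H Q :=
  h.boundary_eq ▸ Finset.mem_singleton_self b

lemma cut_mem (h : EndBlock G H Q b w) : b ∈ H := (mem_boundary.1 h.cut_mem_boundary).1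

lemma cut_notMem (h : EndBlock G H Q b w) : b ∉ Q := (mem_boundary.1 h.cut_mem_boundary).2.1

lemma one_le_card_neighborsIn (h : EndBlock G H Q b w) (hH : OuterComponent G C H) :
    1 ≤ (neighborsIn G H w).card := by
  obtain ⟨y, hy⟩ := hH.boundary_nonempty (Q := {w}) (by simpa using h.subset h.mem) (by simp)
    h.cut_mem (by simpa using fun hbw : b = w => h.cut_notMem (hbw ▸ h.mem))
  obtain ⟨hyH, -, s, hs, hsy⟩ := mem_boundary.1 hy
  obtain rfl := Finset.mem_singleton.1 hs
  exact Finset.card_pos.2 ⟨y, mem_neighborsIn.2 ⟨hyH, hsy⟩⟩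

end EndBlock

lemma OuterComponent.exists_endBlockPair (hH : OuterComponent G C H) (hx : x ∈ H) (hz : z ∈ H)
    (hxz : x ≠ z) (h2 : ¬ TwoConnectedBetween G H x z) :
    ∃ Q₁ Q₂ b₁ b₂ w₁ w₂, EndBlockPair G H Q₁ Q₂ b₁ b₂ w₁ w₂ := by
  classical
  obtain ⟨T₁, hT₁, T₂, hT₂, ⟨t, ht⟩, ⟨s, hs⟩, hdisj, not_adj, hbd₁, hbd₂⟩ :=
    exists_separation_of_not_twoConnectedBetween hx hz hxz h2
  obtain ⟨Q₁, hQ₁, b₁, w₁, hE₁⟩ :=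
    hH.exists_endBlock hT₁ ⟨t, ht⟩ (hT₂ hs) (fun h => hdisj s h hs) hbd₁
  obtain ⟨Q₂, hQ₂, b₂, w₂, hE₂⟩ := hH.exists_endBlock hT₂ ⟨s, hs⟩ (hT₁ ht) (hdisj t ht) hbd₂
  obtain ⟨-, -, t₁, ht₁, htb₁⟩ := mem_boundary.1 hE₁.cut_mem_boundary
  obtain ⟨-, -, t₂, ht₂, htb₂⟩ := mem_boundary.1 hE₂.cut_mem_boundary
  exact ⟨Q₁, Q₂, b₁, b₂, w₁, w₂, hE₁, hE₂, fun y hy hy' => hdisj y (hQ₁ hy) (hQ₂ hy'),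
    fun hb => not_adj t₁ (hQ₁ ht₁) b₁ (hQ₂ hb) htb₁,
    fun hb => not_adj b₂ (hQ₁ hb) t₂ (hQ₂ ht₂) htb₂.symm⟩

namespace EndBlockPair

lemma symm (h : EndBlockPair G H Q₁ Q₂ b₁ b₂ w₁ w₂) : EndBlockPair G H Q₂ Q₁ b₂ b₁ w₂ w₁ where
  left := h.right
  right := h.left
  disjoint y hy hy' := h.disjoint y hy' hy
  left_cut_notMem := h.right_cut_notMem
  right_cut_notMem := h.left_cut_notMem

lemma exists_pathIn_sdiff [DecidableEq V] (h : EndBlockPair G H Q₁ Q₂ b₁ b₂ w₁ w₂)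
    (hH : OuterComponent G C H) : ∃ n, PathIn G (H \ (Q₁ ∪ Q₂)) b₁ b₂ n := by
  have mem_sdiff : ∀ {y}, y ∈ H \ (Q₁ ∪ Q₂) ↔ y ∈ H ∧ y ∉ Q₁ ∧ y ∉ Q₂ := by simp
  have hb₁ : b₁ ∈ componentIn G (H \ (Q₁ ∪ Q₂)) b₁ :=
    self_mem_componentIn (mem_sdiff.2 ⟨h.left.cut_mem, h.left.cut_notMem, h.left_cut_notMem⟩)
  by_cases hb₂ : b₂ ∈ componentIn G (H \ (Q₁ ∪ Q₂)) b₁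
  · obtain ⟨n, hn⟩ := exists_pathIn_componentIn hb₁ hb₂
    exact ⟨n, hn.mono componentIn_subset⟩
  · exfalso
    obtain ⟨y, hy⟩ := hH.boundary_nonempty (Q := componentIn G (H \ (Q₁ ∪ Q₂)) b₁ ∪ Q₁)
      (Finset.union_subset (componentIn_subset.trans Finset.sdiff_subset) h.left.subset)
      ⟨b₁, Finset.mem_union_left _ hb₁⟩ h.right.cut_mem (by simp [hb₂, h.right_cut_notMem])
    obtain ⟨hyH, hyn, t, ht, hty⟩ := mem_boundary.1 hy
    rw [Finset.mem_union, not_or] at hyn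
    rcases Finset.mem_union.1 ht with ht | ht
    · have hyQ₂ : y ∈ Q₂ := by
        by_contra hyQ
        exact hyn.1 (mem_componentIn_of_adj ht hty (mem_sdiff.2 ⟨hyH, hyn.2, hyQ⟩))
      have htH := mem_sdiff.1 (componentIn_subset ht)
      have htb : t ∈ boundary G H Q₂ := mem_boundary.2 ⟨htH.1, htH.2.2, y, hyQ₂, hty.symm⟩
      rw [h.right.boundary_eq, Finset.mem_singleton] at htb
      exact hb₂ (htb ▸ ht)
    · have hyb : y ∈ boundary G H Q₁ := mem_boundary.2 ⟨hyH, hyn.2, t, ht, hty⟩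
      rw [h.left.boundary_eq, Finset.mem_singleton] at hyb
      exact hyn.1 (hyb ▸ hb₁)

lemma exists_le_pathIn (h : EndBlockPair G H Q₁ Q₂ b₁ b₂ w₁ w₂) (hH : OuterComponent G C H)
    {u₁ u₂ : V} (hu₁ : u₁ ∈ Q₁) (hu₂ : u₂ ∈ Q₂) :
    ∃ m ≥ (neighborsIn G H w₁).card + (neighborsIn G H w₂).card, PathIn G H u₁ u₂ m := by
  classical
  obtain ⟨n₀, path₀⟩ := h.exists_pathIn_sdiff hH
  obtain ⟨n₁, hn₁, path₁⟩ := h.left.exists_pathIn u₁ hu₁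
  obtain ⟨n₂, hn₂, path₂⟩ := h.right.exists_pathIn u₂ hu₂
  have hb₁ := h.left_cut_notMem
  have hpath := (path₁.append path₀ fun y hy hy' => by
    simp only [Finset.mem_insert, Finset.mem_sdiff, Finset.mem_union, not_or] at hy hy'
    exact hy.resolve_right hy'.2.1).append path₂.symm fun y hy hy' => by
      have := h.disjoint y
      simp only [Finset.mem_insert, Finset.mem_sdiff, Finset.mem_union, not_or] at hy hy'
      refine hy'.resolve_right fun hyQ₂ => ?_
      rcases hy with (rfl | hy) | hy <;> tauto
  refine ⟨_, by lia, hpath.mono ?_⟩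
  simp only [Finset.union_subset_iff, Finset.insert_subset_iff]
  exact ⟨⟨⟨h.left.cut_mem, h.left.subset⟩, Finset.sdiff_subset⟩, h.right.cut_mem, h.right.subset⟩

lemma kappa_le_card_attachments_add_one (h : EndBlockPair G H Q₁ Q₂ b₁ b₂ w₁ w₂)
    (hH : OuterComponent G C H) : kappa G ≤ (attachments G C Q₁).card + 1 := by
  have hw₂ := h.right.subset h.right.mem
  have := hH.kappa_le_card_boundary_add h.left.subset ⟨w₁, h.left.mem⟩
    (fun hw => h.disjoint _ hw h.right.mem)
    (by simpa [h.left.boundary_eq] using fun he : w₂ = b₁ => h.left_cut_notMem (he ▸ h.right.mem))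
    (fun hw => hH.notMem _ hw₂ (attachments_subset hw))
  rwa [h.left.boundary_eq, Finset.card_singleton, add_comm] at this

end EndBlockPair

lemma mem_crossings [DecidableEq V] : p ∈ crossings σ X Y ↔ p ∈ X ∪ Y ∧
    (p ∈ X ∧ nextIn σ (X ∪ Y) p ∈ Y ∨ p ∈ Y ∧ nextIn σ (X ∪ Y) p ∈ X) := by
  simp only [crossings, Finset.mem_filter]

namespace CyclicOrder

variable [DecidableEq V]

lemma card_inter_le_card_crossings (h : CyclicOrder σ C) (hXY : X ∪ Y ⊆ C) :
    (X ∩ Y).card ≤ (crossings σ X Y).card := by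
  refine Finset.card_le_card fun p hp => ?_
  rw [Finset.mem_inter] at hp
  have hp' := Finset.mem_union_left Y hp.1
  have := Finset.mem_union.1 (h.nextIn_mem hXY hp')
  exact mem_crossings.2 ⟨hp', by tauto⟩

lemma exists_nextIn_notMem (h : CyclicOrder σ C) (hXY : X ∪ Y ⊆ C) (hX : X.Nonempty)
    (hYX : ¬ Y ⊆ X) :
    ∃ p ∈ X, nextIn σ (X ∪ Y) p ∈ Y ∧ nextIn σ (X ∪ Y) p ∉ X := by
  by_contra! hmem
  refine hYX (Finset.subset_union_right.trans <| h.subset_of_forall_nextIn_mem hXY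
    Finset.subset_union_left hX fun p hp => ?_)
  by_contra hn
  have hnext := Finset.mem_union.1 (h.nextIn_mem hXY (Finset.mem_union_left Y hp))
  exact hn (hmem p hp (hnext.resolve_left hn))

lemma two_le_card_crossings (h : CyclicOrder σ C) (hXY : X ∪ Y ⊆ C) (hX : 2 ≤ X.card)
    (hY : 2 ≤ Y.card) : 2 ≤ (crossings σ X Y).card := by
  have hinter := h.card_inter_le_card_crossings hXY
  by_cases hsub : X ⊆ Y
  · rw [Finset.inter_eq_left.2 hsub] at hinter
    exact hX.trans hinter
  by_cases hsub' : Y ⊆ X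
  · rw [Finset.inter_eq_right.2 hsub'] at hinter
    exact hY.trans hinter
  obtain ⟨p, hp, hpY, hpX⟩ := h.exists_nextIn_notMem hXY (Finset.card_pos.1 (by lia)) hsub'
  rw [Finset.union_comm] at hXY
  obtain ⟨q, hq, hqX, -⟩ := h.exists_nextIn_notMem hXY (Finset.card_pos.1 (by lia)) hsub
  rw [Finset.union_comm] at hqX
  have hpq : p ≠ q := by
    rintro rfl
    exact hpX hqX
  rw [← Finset.card_pair hpq]
  refine Finset.card_le_card ?_
  simp only [Finset.insert_subset_iff, Finset.singleton_subset_iff, mem_crossings]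
  exact ⟨⟨Finset.mem_union_left _ hp, Or.inl ⟨hp, hpY⟩⟩,
    Finset.mem_union_right _ hq, Or.inr ⟨hq, hqX⟩⟩

end CyclicOrder

namespace LongestCycle

lemma two_mul_card_union_attachments_add_le [DecidableEq V] (h : LongestCycle G σ C)
    (hH : OuterComponent G C H) (hE : EndBlockPair G H Q₁ Q₂ b₁ b₂ w₁ w₂)
    (h2 : 2 ≤ (attachments G C Q₁).card) :
    2 * (attachments G C Q₁ ∪ attachments G C Q₂).card +
      ((neighborsIn G H w₁).card + (neighborsIn G H w₂).card) *
        (crossings σ (attachments G C Q₁) (attachments G C Q₂)).card ≤ C.card := by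
  refine h.two_mul_card_add_le_of_pathIn hH (fun p hp => ?_)
    (h2.trans (Finset.card_le_card Finset.subset_union_left))
    (fun p hp => (mem_crossings.1 hp).1) fun p hp => ?_
  · simp only [Finset.mem_union, mem_attachments] at hp
    rcases hp with ⟨hp, u, hu, hpu⟩ | ⟨hp, u, hu, hpu⟩
    · exact mem_attachments.2 ⟨hp, u, hE.left.subset hu, hpu⟩
    · exact mem_attachments.2 ⟨hp, u, hE.right.subset hu, hpu⟩
  · rcases (mem_crossings.1 hp).2 with ⟨hpX, hqX⟩ | ⟨hpX, hqX⟩ <;>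
      obtain ⟨-, u, hu, hpu⟩ := mem_attachments.1 hpX <;>
      obtain ⟨-, v, hv, hqv⟩ := mem_attachments.1 hqX
    · obtain ⟨m, hm, hpath⟩ := hE.exists_le_pathIn hH hu hv
      exact ⟨u, v, m, hpu, hqv.symm, hm, hpath⟩
    · obtain ⟨m, hm, hpath⟩ := hE.exists_le_pathIn hH hv hu
      exact ⟨u, v, m, hpu, hqv.symm, hm, hpath.symm⟩

variable [Fintype V] [DecidableRel G.Adj]

lemma four_mul_minDegree_le_of_endBlockPair (h : LongestCycle G σ C) (hH : OuterComponent G C H)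
    (h4 : 4 ≤ kappa G) (hE : EndBlockPair G H Q₁ Q₂ b₁ b₂ w₁ w₂) :
    4 * G.minDegree ≤ C.card + 8 := by
  classical
  have hX₁ := hE.kappa_le_card_attachments_add_one hH
  have hX₂ := hE.symm.kappa_le_card_attachments_add_one hH
  have hXC : attachments G C Q₁ ∪ attachments G C Q₂ ⊆ C :=
    Finset.union_subset attachments_subset attachments_subset
  have hcount := h.two_mul_card_union_attachments_add_le hH hE (by lia)
  have hinter := h.card_inter_le_card_crossings hXC
  have htwo := h.two_le_card_crossings hXC (by lia) (by lia)
  have hadd := Finset.card_union_add_card_inter (attachments G C Q₁) (attachments G C Q₂)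
  have hN₁ := Finset.card_le_card (neighborsIn_subset_attachments (G := G) (C := C) hE.left.mem)
  have hN₂ := Finset.card_le_card (neighborsIn_subset_attachments (G := G) (C := C) hE.right.mem)
  have hd₁ := (G.minDegree_le_degree w₁).trans
    (hH.degree_le_card_add_card (hE.left.subset hE.left.mem))
  have hd₂ := (G.minDegree_le_degree w₂).trans
    (hH.degree_le_card_add_card (hE.right.subset hE.right.mem))
  have hk₁ := hE.left.one_le_card_neighborsIn hH
  have hk₂ := hE.right.one_le_card_neighborsIn hH
  have := two_mul_add_mul_le (l := (neighborsIn G H w₁).card + (neighborsIn G H w₂).card)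
    (by lia) hinter htwo
  lia

lemma four_mul_minDegree_le_of_three_le_card (h : LongestCycle G σ C)
    (hH : OuterComponent G C H) (h4 : 4 ≤ kappa G) (hH3 : 3 ≤ H.card) :
    4 * G.minDegree ≤ C.card + 8 := by
  by_cases h2 : ∀ x ∈ H, ∀ z ∈ H, x ≠ z → TwoConnectedBetween G H x z
  · exact h.four_mul_minDegree_le_of_twoConnected hH h4 hH3 h2
  · push Not at h2
    obtain ⟨x, hx, z, hz, hxz, h2⟩ := h2
    obtain ⟨Q₁, Q₂, b₁, b₂, w₁, w₂, hE⟩ := hH.exists_endBlockPair hx hz hxz h2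
    exact h.four_mul_minDegree_le_of_endBlockPair hH h4 hE

end LongestCycle

end

/-! ### Edges outside a longest cycle -/

/-- The feet of `xy` on `C`: the vertices of `C` adjacent to `x` or `y`. -/
noncomputable def feet [DecidableEq V] (G : SimpleGraph V) (C : Finset V) (x y : V) : Finset V :=
  neighborsIn G C x ∪ neighborsIn G C y

/-- The double feet of `xy` on `C`: the vertices of `C` adjacent to both `x` and `y`. -/
noncomputable def bifeet [DecidableEq V] (G : SimpleGraph V) (C : Finset V) (x y : V) :
    Finset V :=
  neighborsIn G C x ∩ neighborsIn G C y

/-- The markers of `xy`: the successors of its feet and the second successors of its double feet.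
On a longest cycle they are almost independent, see `OuterEdge.eq_of_adj_marker` and
`OuterEdge.eq_of_adj_of_adj`. -/
noncomputable def markers [DecidableEq V] (G : SimpleGraph V) (σ : Equiv.Perm V) (C : Finset V)
    (x y : V) : Finset V :=
  (feet G C x y).image σ ∪ (bifeet G C x y).image fun p => σ (σ p)

/-- `σ ^ a p` is a marker of `xy` because of its foot `p`. -/
structure MarkerStep [DecidableEq V] (G : SimpleGraph V) (C : Finset V) (x y p : V) (a : ℕ) :
    Prop where
  mem_feet : p ∈ feet G C x y
  pos : 0 < a
  le_two : a ≤ 2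
  mem_bifeet : a = 2 → p ∈ bifeet G C x y

/-- `xy` is an edge outside the longest cycle `C`, and the edges outside `C` are independent. -/
structure OuterEdge (G : SimpleGraph V) (σ : Equiv.Perm V) (C : Finset V) (x y : V) : Prop
    extends LongestCycle G σ C where
  left_notMem : x ∉ C
  right_notMem : y ∉ C
  adj_ends : G.Adj x y
  outer_unique : ∀ w, w ∉ C → ∀ u, u ∉ C → ∀ v, v ∉ C → G.Adj w u → G.Adj w v → u = v

section

variable {G : SimpleGraph V} {σ : Equiv.Perm V} {C D : Finset V} {p q u v w x y z : V}
  {a b n L : ℕ}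

lemma neighborsIn_subset : neighborsIn G C v ⊆ C := fun _ hw => (mem_neighborsIn.1 hw).1

namespace LongestCycle

lemma two_le_of_adj_of_adj (h : LongestCycle G σ C) (hw : w ∉ C) (hp : p ∈ C) (hn : 0 < n)
    (hn' : n < C.card) (hpw : G.Adj p w) (hwq : G.Adj w ((σ ^ n) p)) : 2 ≤ n :=
  h.add_two_le_of_pathIn (H := {w}) (by simpa) hp hn hn'
    (PathIn.nil (Finset.mem_singleton_self w)) hpw hwq

lemma three_le_of_adj_of_adj (h : LongestCycle G σ C) (hu : u ∉ C) (hw : w ∉ C) (hp : p ∈ C)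
    (hn : 0 < n) (hn' : n < C.card) (hpu : G.Adj p u) (huw : G.Adj u w)
    (hwq : G.Adj w ((σ ^ n) p)) : 3 ≤ n := by
  classical
  exact h.add_two_le_of_pathIn (H := {u, w}) (by simp [hu, hw]) hp hn hn'
    (PathIn.cons huw (PathIn.nil (Finset.mem_singleton_self w)) (by simpa using huw.ne)) hpu hwq

end LongestCycle

lemma mem_feet [DecidableEq V] : p ∈ feet G C x y ↔ p ∈ C ∧ (G.Adj x p ∨ G.Adj y p) := by
  simp only [feet, Finset.mem_union, mem_neighborsIn, and_or_left]

lemma mem_bifeet [DecidableEq V] : p ∈ bifeet G C x y ↔ p ∈ C ∧ G.Adj x p ∧ G.Adj y p := by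
  simp only [bifeet, Finset.mem_inter, mem_neighborsIn, ← and_and_left]

lemma bifeet_subset_feet [DecidableEq V] : bifeet G C x y ⊆ feet G C x y := fun _ hp =>
  mem_feet.2 ((mem_bifeet.1 hp).imp_right fun h => Or.inl h.1)

lemma markerStep_one [DecidableEq V] (hp : p ∈ feet G C x y) : MarkerStep G C x y p 1 :=
  ⟨hp, one_pos, one_le_two, by lia⟩

lemma MarkerStep.eq_one_or_eq_two [DecidableEq V] (hs : MarkerStep G C x y p a) :
    a = 1 ∨ a = 2 := by
  have := hs.pos
  have := hs.le_two
  lia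

lemma mem_markers [DecidableEq V] :
    v ∈ markers G σ C x y ↔ ∃ p a, MarkerStep G C x y p a ∧ (σ ^ a) p = v := by
  simp only [markers, Finset.mem_union, Finset.mem_image]
  constructor
  · rintro (⟨p, hp, rfl⟩ | ⟨p, hp, rfl⟩)
    · exact ⟨p, 1, markerStep_one hp, by rw [pow_one]⟩
    · exact ⟨p, 2, ⟨bifeet_subset_feet hp, two_pos, le_rfl, fun _ => hp⟩, by simp [pow_two]⟩
  · rintro ⟨p, a, hs, rfl⟩
    obtain rfl | rfl := hs.eq_one_or_eq_two
    · exact Or.inl ⟨p, hs.mem_feet, by rw [pow_one]⟩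
    · exact Or.inr ⟨p, hs.mem_bifeet rfl, by simp [pow_two]⟩

lemma MarkerStep.mem_markers [DecidableEq V] (hs : MarkerStep G C x y p a) :
    (σ ^ a) p ∈ markers G σ C x y :=
  _root_.mem_markers.2 ⟨p, a, hs, rfl⟩

lemma apply_mem_markers [DecidableEq V] (hp : p ∈ feet G C x y) : σ p ∈ markers G σ C x y :=
  Finset.mem_union_left _ (Finset.mem_image_of_mem _ hp)

namespace OuterEdge

lemma symm (e : OuterEdge G σ C x y) : OuterEdge G σ C y x where
  toLongestCycle := e.toLongestCycle
  left_notMem := e.right_notMem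
  right_notMem := e.left_notMem
  adj_ends := e.adj_ends.symm
  outer_unique := e.outer_unique

variable [DecidableEq V]

lemma markers_subset (e : OuterEdge G σ C x y) : markers G σ C x y ⊆ C := by
  intro v hv
  obtain ⟨p, a, hs, rfl⟩ := mem_markers.1 hv
  exact e.pow_mem (mem_feet.1 hs.mem_feet).1 a

lemma notMem_of_mem_ends (e : OuterEdge G σ C x y) : ∀ v ∈ ({x, y} : Finset V), v ∉ C := by
  simp [e.left_notMem, e.right_notMem]

lemma exists_pathIn_ends (e : OuterEdge G σ C x y) (hs : MarkerStep G C x y p a)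
    (ht : MarkerStep G C x y q b) :
    ∃ u v m, a ≤ m + 1 ∧ b ≤ m + 1 ∧ PathIn G {x, y} u v m ∧ G.Adj p u ∧ G.Adj v q := by
  have hxy : PathIn G {x, y} x y 1 := PathIn.cons e.adj_ends
    (PathIn.nil (Finset.mem_singleton_self y)) (by simpa using e.adj_ends.ne)
  have ha := hs.le_two
  have hb := ht.le_two
  have hp := (mem_feet.1 hs.mem_feet).2
  have hq := (mem_feet.1 ht.mem_feet).2
  by_cases hpq : G.Adj x p ∧ G.Adj y q
  · exact ⟨x, y, 1, ha, hb, hxy, hpq.1.symm, hpq.2⟩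
  by_cases hqp : G.Adj y p ∧ G.Adj x q
  · exact ⟨y, x, 1, ha, hb, hxy.symm, hqp.1.symm, hqp.2⟩
  have ha1 : a ≤ 1 := by
    by_contra! ha1
    have := mem_bifeet.1 (hs.mem_bifeet (by lia))
    tauto
  have hb1 : b ≤ 1 := by
    by_contra! hb1
    have := mem_bifeet.1 (ht.mem_bifeet (by lia))
    tauto
  obtain h | h : (G.Adj x p ∧ G.Adj x q) ∨ (G.Adj y p ∧ G.Adj y q) := by tauto
  · exact ⟨x, x, 0, ha1, hb1, PathIn.nil (by simp), h.1.symm, h.2⟩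
  · exact ⟨y, y, 0, ha1, hb1, PathIn.nil (by simp), h.1.symm, h.2⟩

lemma lt_and_lt_of_markerStep (e : OuterEdge G σ C x y) (hs : MarkerStep G C x y p a)
    (hn : 0 < n) (hn' : n < C.card) (ht : MarkerStep G C x y ((σ ^ n) p) b) : a < n ∧ b < n := by
  obtain ⟨u, v, m, ha, hb, hm, hpu, hvq⟩ := e.exists_pathIn_ends hs ht
  have := e.add_two_le_of_pathIn e.notMem_of_mem_ends (mem_feet.1 hs.mem_feet).1 hn hn' hm hpu hvq
  lia

lemma notMem_feet (e : OuterEdge G σ C x y) (hv : v ∈ markers G σ C x y) :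
    v ∉ feet G C x y := by
  intro hf
  obtain ⟨p, a, hs, rfl⟩ := mem_markers.1 hv
  have h3 := e.three_le
  have h2 := hs.le_two
  exact (e.lt_and_lt_of_markerStep hs hs.pos (by lia) (markerStep_one hf)).1.false

lemma not_adj_left (e : OuterEdge G σ C x y) (hv : v ∈ markers G σ C x y) : ¬ G.Adj x v :=
  fun h => e.notMem_feet hv (mem_feet.2 ⟨e.markers_subset hv, Or.inl h⟩)

lemma not_adj_right (e : OuterEdge G σ C x y) (hv : v ∈ markers G σ C x y) : ¬ G.Adj y v :=
  fun h => e.notMem_feet hv (mem_feet.2 ⟨e.markers_subset hv, Or.inr h⟩)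

/-- The given path crosses a path from `p` to `q` through `x` or `y`; the two paths and the arcs
between their ends form a cycle. -/
lemma lt_of_pathIn_markers (e : OuterEdge G σ C x y) (hs : MarkerStep G C x y p a)
    (ht : MarkerStep G C x y q b) (hpq : p ≠ q) (hD : PathIn G D ((σ ^ a) p) ((σ ^ b) q) L)
    (hDC : ∀ z ∈ D, z ∈ C → z = (σ ^ a) p ∨ z = (σ ^ b) q) (hx : x ∉ D) (hy : y ∉ D) :
    L < a := by
  have hp := (mem_feet.1 hs.mem_feet).1
  have hq := (mem_feet.1 ht.mem_feet).1
  have foot_notMem : ∀ r ∈ feet G C x y, r ∉ D := fun r hr hrD => by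
    rcases hDC r hrD (mem_feet.1 hr).1 with rfl | rfl
    · exact e.notMem_feet hs.mem_markers hr
    · exact e.notMem_feet ht.mem_markers hr
  obtain ⟨n, hn, hn', rfl⟩ := e.exists_pow_pos hp hq hpq
  obtain ⟨u, v, m, ham, hbm, hm, hpu, hvq⟩ := e.exists_pathIn_ends hs ht
  have hback : (σ ^ (C.card - n)) ((σ ^ n) p) = p := by
    rw [← Equiv.Perm.mul_apply, ← pow_add, Nat.sub_add_cancel hn'.le, e.pow_card hp]
  have han := (e.lt_and_lt_of_markerStep hs hn hn' ht).1
  have hbn := (e.lt_and_lt_of_markerStep ht (n := C.card - n) (by lia) (by lia)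
    (by rwa [hback])).1
  have hadd : (σ ^ b) ((σ ^ n) p) = (σ ^ (n + b)) p := by
    rw [← Equiv.Perm.mul_apply, ← pow_add, add_comm]
  rw [hadd] at hD hDC
  have := e.crossing_le hp hs.pos han.le ht.pos (by lia)
    (hm.link hpu hvq (fun h => e.notMem_of_mem_ends _ h hp)
      (fun h => e.notMem_of_mem_ends _ h hq) hpq) hD
    (fun z hz hzC => by
      simp only [Finset.mem_insert] at hz
      rcases hz with h | h | h
      exacts [Or.inl h, Or.inr h, absurd hzC (e.notMem_of_mem_ends z (by simpa using h))])
    hDC (by simp [foot_notMem p hs.mem_feet, foot_notMem _ ht.mem_feet, hx, hy])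
  lia

lemma eq_of_adj_marker (e : OuterEdge G σ C x y) (hp : p ∈ feet G C x y)
    (hv : v ∈ markers G σ C x y) (hpv : G.Adj (σ p) v) : v = σ (σ p) := by
  have ne_of_mem : ∀ {r w}, w ∉ C → r ∈ C → w ≠ r := fun hw hr h => hw (h ▸ hr)
  have hvC := e.markers_subset hv
  have hpC := e.apply_mem_iff.2 (mem_feet.1 hp).1
  obtain ⟨q, b, ht, rfl⟩ := mem_markers.1 hv
  by_cases hpq : p = q
  · subst hpq
    obtain rfl | rfl := ht.eq_one_or_eq_two
    · exact absurd hpv (by simp)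
    · simp [pow_two]
  · exact absurd (e.lt_of_pathIn_markers (L := 1) (D := {σ p, (σ ^ b) q}) (markerStep_one hp) ht
      hpq (PathIn.cons hpv (PathIn.nil (Finset.mem_singleton_self _)) (by simpa using hpv.ne))
      (by simp) (by simp [ne_of_mem e.left_notMem hpC, ne_of_mem e.left_notMem hvC])
      (by simp [ne_of_mem e.right_notMem hpC, ne_of_mem e.right_notMem hvC])) (lt_irrefl 1)

lemma markerStep_unique_of_adj (e : OuterEdge G σ C x y) (hw : w ∉ C)
    (hs : MarkerStep G C x y p a) (ht : MarkerStep G C x y p b) (hwa : G.Adj w ((σ ^ a) p))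
    (hwb : G.Adj w ((σ ^ b) p)) : b ≤ a := by
  by_contra! hab
  obtain ⟨rfl, rfl⟩ : a = 1 ∧ b = 1 + 1 := by
    have := hs.pos
    have := ht.le_two
    lia
  rw [pow_add, Equiv.Perm.mul_apply, pow_one] at hwb
  have h3 := e.three_le
  have := e.two_le_of_adj_of_adj hw (e.apply_mem_iff.2 (mem_feet.1 hs.mem_feet).1) one_pos
    (by lia) (by simpa using hwa.symm) (by simpa using hwb)
  lia

lemma eq_of_adj_of_adj (e : OuterEdge G σ C x y) (hw : w ∉ C) (hwx : w ≠ x) (hwy : w ≠ y)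
    (hu : u ∈ markers G σ C x y) (hv : v ∈ markers G σ C x y) (hwu : G.Adj w u)
    (hwv : G.Adj w v) : u = v := by
  have ne_of_mem : ∀ {r w}, w ∉ C → r ∈ C → w ≠ r := fun hw hr h => hw (h ▸ hr)
  have huC := e.markers_subset hu
  have hvC := e.markers_subset hv
  obtain ⟨p, a, hs, rfl⟩ := mem_markers.1 hu
  obtain ⟨q, b, ht, rfl⟩ := mem_markers.1 hv
  by_cases hpq : p = q
  · subst hpq
    rw [(e.markerStep_unique_of_adj hw ht hs hwv hwu).antisymm
      (e.markerStep_unique_of_adj hw hs ht hwu hwv)]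
  · by_contra hne
    have hpath := (PathIn.nil (G := G) (Finset.mem_singleton_self w)).link hwu.symm hwv
      (by simpa using (ne_of_mem hw huC).symm) (by simpa using (ne_of_mem hw hvC).symm) hne
    have := e.lt_of_pathIn_markers hs ht hpq hpath (fun z hz hzC => by
        simp only [Finset.mem_insert, Finset.mem_singleton] at hz
        rcases hz with h | h | rfl
        exacts [Or.inl h, Or.inr h, absurd hzC hw])
      (by simp [ne_of_mem e.left_notMem huC, ne_of_mem e.left_notMem hvC, hwx.symm])
      (by simp [ne_of_mem e.right_notMem huC, ne_of_mem e.right_notMem hvC, hwy.symm])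
    have := hs.le_two
    lia

lemma card_markers (e : OuterEdge G σ C x y) :
    (markers G σ C x y).card = (neighborsIn G C x).card + (neighborsIn G C y).card := by
  have hdisj : Disjoint ((feet G C x y).image σ) ((bifeet G C x y).image fun p => σ (σ p)) := by
    rw [Finset.disjoint_left]
    intro v hv hv'
    obtain ⟨p, hp, rfl⟩ := Finset.mem_image.1 hv
    obtain ⟨q, hq, hqp⟩ := Finset.mem_image.1 hv'
    exact e.notMem_feet (apply_mem_markers (bifeet_subset_feet hq)) (σ.injective hqp ▸ hp)
  rw [markers, Finset.card_union_of_disjoint hdisj, Finset.card_image_of_injective _ σ.injective,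
    Finset.card_image_of_injective (f := fun p => σ (σ p)) _ (σ.injective.comp σ.injective), feet,
    bifeet, Finset.card_union_add_card_inter]

end OuterEdge

end

/-! ### Counting along a minimum separation -/

/-- The neighbours of `w` on `C` that are not markers of `xy`. -/
noncomputable def freeNeighbors [DecidableEq V] (G : SimpleGraph V) (σ : Equiv.Perm V)
    (C : Finset V) (x y w : V) : Finset V :=
  neighborsIn G (C \ markers G σ C x y) w

section

variable {G : SimpleGraph V} {σ : Equiv.Perm V} {A B C D M S : Finset V} {o : ℕ}
  {p v w x y z : V}

namespace MinSeparation

lemma mem_of_adj_left (c : MinSeparation G S A B) (hv : v ∈ A) (h : G.Adj v w) :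
    w ∈ A ∨ w ∈ S := by
  have := c.cover w
  have := c.not_adj v hv w
  tauto

lemma mem_of_adj_right (c : MinSeparation G S A B) (hv : v ∈ B) (h : G.Adj v w) :
    w ∈ B ∨ w ∈ S :=
  c.symm.mem_of_adj_left hv h

lemma mem_inter_of_adj_of_adj [DecidableEq V] (c : MinSeparation G S A B) (hw : w ∈ A)
    (hz : z ∈ B) (hv : v ∈ C) (hwv : G.Adj w v) (hzv : G.Adj z v) : v ∈ S ∩ C := by
  refine Finset.mem_inter.2 ⟨?_, hv⟩
  rcases c.mem_of_adj_left hw hwv with h | h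
  · exact absurd hzv.symm (c.not_adj v h z hz)
  · exact h

lemma card_inter_add_card_sdiff [DecidableEq V] (c : MinSeparation G S A B) (C : Finset V) :
    (S ∩ C).card + (S \ C).card = kappa G := by
  rw [Finset.card_inter_add_card_sdiff, c.card_eq]

lemma degree_add_card_lt (c : MinSeparation G S A B) (hz : z ∈ B) (hD : D ⊆ S)
    [Fintype (G.neighborSet z)] :
    G.degree z + D.card < B.card + kappa G + (neighborsIn G D z).card := by
  classical
  have hsub : G.neighborFinset z ⊆ B.erase z ∪ S \ D ∪ neighborsIn G D z := by
    intro w hw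
    rw [G.mem_neighborFinset] at hw
    have := c.mem_of_adj_right hz hw
    have := hw.ne'
    simp only [Finset.mem_union, Finset.mem_erase, Finset.mem_sdiff, mem_neighborsIn]
    tauto
  have := (Finset.card_le_card hsub).trans (Finset.card_union_le _ _)
  have := Finset.card_union_le (B.erase z) (S \ D)
  have := Finset.card_erase_add_one hz
  have := Finset.card_sdiff_add_card_eq_card hD
  have := c.card_eq
  rw [G.card_neighborFinset_eq_degree] at *
  lia

end MinSeparation

variable [DecidableEq V]

lemma freeNeighbors_subset : freeNeighbors G σ C x y w ⊆ C \ markers G σ C x y :=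
  neighborsIn_subset

lemma mem_freeNeighbors :
    v ∈ freeNeighbors G σ C x y w ↔ v ∈ C ∧ v ∉ markers G σ C x y ∧ G.Adj w v := by
  rw [freeNeighbors, mem_neighborsIn, Finset.mem_sdiff, and_assoc]

lemma MinSeparation.freeNeighbors_inter_subset (c : MinSeparation G S A B) (hw : w ∈ A)
    (hz : z ∈ B) : freeNeighbors G σ C x y w ∩ freeNeighbors G σ C x y z ⊆ S ∩ C := by
  intro v hv
  obtain ⟨hwv, hzv⟩ := Finset.mem_inter.1 hv
  rw [mem_freeNeighbors] at hwv hzv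
  exact c.mem_inter_of_adj_of_adj hw hz hwv.1 hwv.2.2 hzv.2.2

lemma degree_le_card_add_card_add_card [Fintype V] [DecidableRel G.Adj] :
    G.degree w ≤ (freeNeighbors G σ C x y w).card + (neighborsIn G (markers G σ C x y) w).card +
      (neighborsIn G Cᶜ w).card := by
  have hsub : G.neighborFinset w ⊆ freeNeighbors G σ C x y w ∪
      neighborsIn G (markers G σ C x y) w ∪ neighborsIn G Cᶜ w := by
    intro v hv
    rw [G.mem_neighborFinset] at hv
    simp only [Finset.mem_union, mem_freeNeighbors, mem_neighborsIn, Finset.mem_compl]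
    tauto
  rw [← G.card_neighborFinset_eq_degree]
  exact ((Finset.card_le_card hsub).trans (Finset.card_union_le _ _)).trans
    (Nat.add_le_add_right (Finset.card_union_le _ _) _)

lemma degree_le_card_freeNeighbors_add [Fintype V] [DecidableRel G.Adj]
    (h : ∀ u ∈ markers G σ C x y, ∀ v ∈ markers G σ C x y, G.Adj w u → G.Adj w v → u = v) :
    G.degree w ≤ (freeNeighbors G σ C x y w).card + 1 + (neighborsIn G Cᶜ w).card := by
  have hM : (neighborsIn G (markers G σ C x y) w).card ≤ 1 :=
    Finset.card_le_one.2 fun u hu v hv => by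
      rw [mem_neighborsIn] at hu hv
      exact h u hu.1 v hv.1 hu.2 hv.2
  have := degree_le_card_add_card_add_card (G := G) (σ := σ) (C := C) (w := w) (x := x) (y := y)
  lia

namespace OuterEdge

lemma freeNeighbors_left (e : OuterEdge G σ C x y) :
    freeNeighbors G σ C x y x = neighborsIn G C x := by
  ext v
  have := e.not_adj_left (v := v)
  rw [mem_freeNeighbors, mem_neighborsIn]
  tauto

lemma exists_apply_mem_of_mem_markers (e : OuterEdge G σ C x y) (c : MinSeparation G S A B)
    (hB : ∀ p ∈ feet G C x y, σ p ∉ B) (hv : v ∈ markers G σ C x y) (hvB : v ∈ B) :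
    ∃ q ∈ feet G C x y, σ (σ q) = v ∧ σ q ∈ S := by
  obtain ⟨q, a, hs, rfl⟩ := mem_markers.1 hv
  have hqC := e.apply_mem_iff.2 (mem_feet.1 hs.mem_feet).1
  have hqB := hB q hs.mem_feet
  obtain rfl | rfl := hs.eq_one_or_eq_two
  · exact absurd (by simpa using hvB) hqB
  · rw [pow_two, Equiv.Perm.mul_apply] at hvB ⊢
    exact ⟨q, hs.mem_feet, rfl, (c.mem_of_adj_right hvB (e.adj _ hqC).symm).resolve_left hqB⟩

lemma card_freeNeighbors_add_card_add_card_le (e : OuterEdge G σ C x y)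
    (c : MinSeparation G S A B) (hw : w ∈ A) (hBC : B ⊆ C) :
    (freeNeighbors G σ C x y w).card + (markers G σ C x y \ B).card + B.card ≤ C.card := by
  have hM := e.markers_subset
  rw [← Finset.card_union_of_disjoint, ← Finset.card_union_of_disjoint]
  · refine Finset.card_le_card (Finset.union_subset (Finset.union_subset ?_ ?_) hBC)
    · exact freeNeighbors_subset.trans Finset.sdiff_subset
    · exact Finset.sdiff_subset.trans hM
  · refine Finset.disjoint_union_left.2 ⟨Finset.disjoint_left.2 fun v hv hvB => ?_,
      Finset.sdiff_disjoint⟩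
    exact c.not_adj w hw v hvB (mem_freeNeighbors.1 hv).2.2
  · exact Finset.disjoint_left.2 fun v hv hv' =>
      (mem_freeNeighbors.1 hv).2.1 (Finset.mem_sdiff.1 hv').1

lemma card_neighborsIn_compl_le_one [Fintype V] (e : OuterEdge G σ C x y) (hw : w ∉ C) :
    (neighborsIn G Cᶜ w).card ≤ 1 :=
  Finset.card_le_one.2 fun u hu v hv => by
    rw [mem_neighborsIn, Finset.mem_compl] at hu hv
    exact e.outer_unique w hw u hu.1 v hv.1 hu.2 hv.2

variable [Fintype V] [DecidableRel G.Adj]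

lemma minDegree_le_card_freeNeighbors_left_add_one (e : OuterEdge G σ C x y) :
    G.minDegree ≤ (freeNeighbors G σ C x y x).card + 1 := by
  have hM : neighborsIn G (markers G σ C x y) x = ∅ :=
    Finset.eq_empty_of_forall_notMem fun v hv =>
      e.not_adj_left (mem_neighborsIn.1 hv).1 (mem_neighborsIn.1 hv).2
  have hx := (G.minDegree_le_degree x).trans
    (degree_le_card_add_card_add_card (σ := σ) (C := C) (x := x) (y := y))
  rw [hM, Finset.card_empty] at hx
  have := e.card_neighborsIn_compl_le_one e.left_notMem
  lia

lemma two_mul_minDegree_le_card_markers_add_two (e : OuterEdge G σ C x y) :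
    2 * G.minDegree ≤ (markers G σ C x y).card + 2 := by
  have := e.card_markers
  have hx := e.minDegree_le_card_freeNeighbors_left_add_one
  have hy := e.symm.minDegree_le_card_freeNeighbors_left_add_one
  rw [e.freeNeighbors_left] at hx
  rw [e.symm.freeNeighbors_left] at hy
  lia

lemma minDegree_le_card_freeNeighbors_apply_add (e : OuterEdge G σ C x y)
    (hp : p ∈ feet G C x y) :
    G.minDegree ≤
      (freeNeighbors G σ C x y (σ p)).card + 1 + (neighborsIn G Cᶜ (σ p)).card :=
  (G.minDegree_le_degree _).trans <| degree_le_card_freeNeighbors_add fun _ hu _ hv h h' =>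
    (e.eq_of_adj_marker hp hu h).trans (e.eq_of_adj_marker hp hv h').symm

lemma minDegree_le_card_freeNeighbors_add (e : OuterEdge G σ C x y) (hw : w ∉ C) (hwx : w ≠ x)
    (hwy : w ≠ y) :
    G.minDegree ≤ (freeNeighbors G σ C x y w).card + 1 + (neighborsIn G Cᶜ w).card :=
  (G.minDegree_le_degree w).trans <| degree_le_card_freeNeighbors_add fun _ hu _ hv h h' =>
    e.eq_of_adj_of_adj hw hwx hwy hu hv h h'

lemma two_mul_minDegree_add_card_add_card_le (e : OuterEdge G σ C x y) (w z : V) :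
    2 * G.minDegree + (freeNeighbors G σ C x y w).card + (freeNeighbors G σ C x y z).card ≤
      C.card + (freeNeighbors G σ C x y w ∩ freeNeighbors G σ C x y z).card + 2 := by
  have := Finset.card_union_add_card_inter (freeNeighbors G σ C x y w) (freeNeighbors G σ C x y z)
  have := Finset.card_le_card
    (Finset.union_subset (freeNeighbors_subset (w := w)) (freeNeighbors_subset (w := z)) :
      freeNeighbors G σ C x y w ∪ freeNeighbors G σ C x y z ⊆ _)
  have := Finset.card_sdiff_add_card_eq_card e.markers_subset
  have := e.two_mul_minDegree_le_card_markers_add_two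
  lia

lemma minDegree_add_card_markers_inter_le (e : OuterEdge G σ C x y) (c : MinSeparation G S A B)
    (hB : ∀ p ∈ feet G C x y, σ p ∉ B) (hne : (markers G σ C x y ∩ B).Nonempty) :
    G.minDegree + (markers G σ C x y ∩ B).card ≤ B.card + kappa G ∧ (S ∩ C).Nonempty := by
  set D := (markers G σ C x y ∩ B).image σ.symm
  have exists_foot : ∀ d ∈ D, ∃ q ∈ feet G C x y, d = σ q ∧ d ∈ S := by
    intro d hd
    obtain ⟨v, hv, rfl⟩ := Finset.mem_image.1 hd
    obtain ⟨hvM, hvB⟩ := Finset.mem_inter.1 hv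
    obtain ⟨q, hq, rfl, hqS⟩ := e.exists_apply_mem_of_mem_markers c hB hvM hvB
    rw [Equiv.symm_apply_apply]
    exact ⟨q, hq, rfl, hqS⟩
  have hDS : D ⊆ S := fun d hd => (exists_foot d hd).choose_spec.2.2
  have hDC : D ⊆ C := by
    intro d hd
    obtain ⟨q, hq, rfl, -⟩ := exists_foot d hd
    exact e.apply_mem_iff.2 (mem_feet.1 hq).1
  refine ⟨?_, (hne.image σ.symm).mono (Finset.subset_inter hDS hDC)⟩
  obtain ⟨z, hz⟩ := hne
  obtain ⟨hzM, hzB⟩ := Finset.mem_inter.1 hz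
  have hDz : neighborsIn G D z ⊆ {σ.symm z} := by
    intro d hd
    obtain ⟨hdD, hzd⟩ := mem_neighborsIn.1 hd
    obtain ⟨q, hq, rfl, -⟩ := exists_foot d hdD
    simp [e.eq_of_adj_marker hq hzM hzd.symm]
  have := Finset.card_le_card hDz
  rw [Finset.card_singleton] at this
  have := Finset.card_image_of_injective (markers G σ C x y ∩ B) σ.symm.injective
  have := c.degree_add_card_lt hzB hDS
  have := G.minDegree_le_degree z
  lia

lemma four_mul_minDegree_le_of_right_subset (e : OuterEdge G σ C x y)
    (c : MinSeparation G S A B) (hBC : B ⊆ C) (hB : ∀ p ∈ feet G C x y, σ p ∉ B) (hw : w ∈ A)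
    (hwo : G.minDegree ≤ (freeNeighbors G σ C x y w).card + 1 + o) (ho : o + 2 ≤ kappa G)
    (ho' : (S ∩ C).Nonempty → o + 3 ≤ kappa G) :
    4 * G.minDegree ≤ C.card + 2 * kappa G := by
  have := e.two_mul_minDegree_le_card_markers_add_two
  have := e.card_freeNeighbors_add_card_add_card_le c hw hBC
  have hsplit := Finset.card_sdiff_add_card_inter (markers G σ C x y) B
  rcases (markers G σ C x y ∩ B).eq_empty_or_nonempty with hempty | hne
  · rw [hempty, Finset.card_empty] at hsplit
    obtain ⟨b, hb⟩ := c.nonempty_right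
    have hb' := c.degree_add_card_lt hb (Finset.empty_subset S)
    have := G.minDegree_le_degree b
    rw [Finset.card_empty, Finset.card_eq_zero.2 (Finset.subset_empty.1 neighborsIn_subset)] at hb'
    lia
  · obtain ⟨hle, hSC⟩ := e.minDegree_add_card_markers_inter_le c hB hne
    have := ho' hSC
    lia

end OuterEdge

end

/-! ### The two types of minimum separations -/

/-- A vertex `w` of the side `A` of a minimum separation with many neighbours on `C`: apart from at
most one of them, the neighbours of `w` are free or lie outside both `C` and `A`, and the latter
occur only if `w` is a marker. -/
structure SideWitness [Fintype V] [DecidableEq V] (G : SimpleGraph V) [DecidableRel G.Adj]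
    (σ : Equiv.Perm V) (C A : Finset V) (x y w : V) : Prop where
  mem : w ∈ A
  minDegree_le :
    G.minDegree ≤ (freeNeighbors G σ C x y w).card + 1 + (neighborsIn G Cᶜ w).card
  not_adj_left : ¬ G.Adj w x
  not_adj_right : ¬ G.Adj w y
  outer : ∀ v, v ∉ C → G.Adj w v → w ∈ markers G σ C x y ∧ v ∉ A

section

variable {G : SimpleGraph V} {σ : Equiv.Perm V} {A B C S : Finset V} {p w x y z : V}

namespace OuterEdge

lemma exists_apply_feet_mem [Finite V] [DecidableEq V] (e : OuterEdge G σ C x y)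
    (c : MinSeparation G S A B) (hx : x ∈ S) (hy : y ∈ S) :
    ∃ p ∈ feet G C x y, σ p ∈ A ∨ σ p ∈ B := by
  classical
  have := Fintype.ofFinite V
  by_contra! hnone
  have hsub : (feet G C x y).image σ ⊆ S ∩ C := by
    intro v hv
    obtain ⟨p, hp, rfl⟩ := Finset.mem_image.1 hv
    have := c.cover (σ p)
    have := hnone p hp
    exact Finset.mem_inter.2 ⟨by tauto, e.apply_mem_iff.2 (mem_feet.1 hp).1⟩
  have hfeet := Finset.card_le_card hsub
  rw [Finset.card_image_of_injective _ σ.injective] at hfeet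
  have hxy : ({x, y} : Finset V) ⊆ S \ C := by
    simp [Finset.insert_subset_iff, hx, hy, e.left_notMem, e.right_notMem]
  have hxy' := Finset.card_le_card hxy
  rw [Finset.card_pair e.adj_ends.ne] at hxy'
  have hfree := e.minDegree_le_card_freeNeighbors_left_add_one
  rw [e.freeNeighbors_left] at hfree
  have := Finset.card_le_card
    (show neighborsIn G C x ⊆ feet G C x y from Finset.subset_union_left)
  have := c.card_inter_add_card_sdiff C
  have : Nonempty V := ⟨x⟩
  have := G.le_minDegree_of_forall_le_degree _ fun v => kappa_le_degree G v
  lia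

variable [Fintype V] [DecidableRel G.Adj]

lemma four_mul_minDegree_le_of_apply_mem_right [DecidableEq V] (e : OuterEdge G σ C x y)
    (c : MinSeparation G S A B) (h4 : 4 ≤ kappa G) (hx : x ∈ A) (hBC : B ⊆ C)
    (hp : p ∈ feet G C x y) (hpB : σ p ∈ B) : 4 * G.minDegree ≤ C.card + 2 * kappa G := by
  have hout : neighborsIn G Cᶜ (σ p) ⊆ S \ C := by
    intro v hv
    obtain ⟨hvC, hv⟩ := mem_neighborsIn.1 hv
    rw [Finset.mem_compl] at hvC
    exact Finset.mem_sdiff.2 ⟨(c.mem_of_adj_right hpB hv).resolve_left fun h => hvC (hBC h), hvC⟩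
  have := Finset.card_le_card hout
  have := Finset.card_le_card (c.freeNeighbors_inter_subset (σ := σ) (C := C) (x := x) (y := y)
    hx hpB)
  have := c.card_inter_add_card_sdiff C
  have := e.two_mul_minDegree_add_card_add_card_le x (σ p)
  have := e.minDegree_le_card_freeNeighbors_left_add_one
  have := e.minDegree_le_card_freeNeighbors_apply_add hp
  lia

lemma subset_freeNeighbors_of_lt [DecidableEq V] (e : OuterEdge G σ C x y)
    (c : MinSeparation G S A B) (h4 : 4 ≤ kappa G)
    (hlt : C.card + 2 * kappa G < 4 * G.minDegree) (hx : x ∈ A) (hw : w ∈ B) (hwC : w ∉ C)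
    (hwy : w ≠ y) : S ⊆ freeNeighbors G σ C x y w := by
  have hwx : w ≠ x := fun h => c.disj x hx (h ▸ hw)
  have hsub := (c.freeNeighbors_inter_subset (σ := σ) (C := C) (x := x) (y := y) hx hw).trans
    Finset.inter_subset_left
  have hcard : S.card ≤ (freeNeighbors G σ C x y x ∩ freeNeighbors G σ C x y w).card := by
    have := e.two_mul_minDegree_add_card_add_card_le x w
    have := e.minDegree_le_card_freeNeighbors_left_add_one
    have := e.minDegree_le_card_freeNeighbors_add hwC hwx hwy
    have := e.card_neighborsIn_compl_le_one hwC
    have := c.card_eq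
    lia
  exact (Finset.eq_of_subset_of_card_le hsub hcard).ge.trans Finset.inter_subset_right

lemma exists_adj_markers_and_exists_adj_of_lt [DecidableEq V] (e : OuterEdge G σ C x y)
    (c : MinSeparation G S A B) (h4 : 4 ≤ kappa G)
    (hlt : C.card + 2 * kappa G < 4 * G.minDegree) (hx : x ∈ A) (hw : w ∈ B) (hwC : w ∉ C)
    (hwy : w ≠ y) : (∃ u ∈ markers G σ C x y, G.Adj w u) ∧ ∃ z, z ∉ C ∧ G.Adj w z := by
  have hwx : w ≠ x := fun h => c.disj x hx (h ▸ hw)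
  have hfree : (freeNeighbors G σ C x y w).card + 2 ≤ G.minDegree := by
    have := Finset.card_le_card
      ((c.freeNeighbors_inter_subset (σ := σ) (C := C) (x := x) (y := y) hx hw).trans
        Finset.inter_subset_left)
    have := e.two_mul_minDegree_add_card_add_card_le x w
    have := e.minDegree_le_card_freeNeighbors_left_add_one
    have := c.card_eq
    lia
  have hmarkers : 0 < (neighborsIn G (markers G σ C x y) w).card := by
    have := degree_le_card_add_card_add_card (G := G) (σ := σ) (C := C) (x := x) (y := y) (w := w)
    have := G.minDegree_le_degree w
    have := e.card_neighborsIn_compl_le_one hwC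
    lia
  have houter : 0 < (neighborsIn G Cᶜ w).card := by
    have := e.minDegree_le_card_freeNeighbors_add hwC hwx hwy
    lia
  obtain ⟨u, hu⟩ := Finset.card_pos.1 hmarkers
  obtain ⟨z, hz⟩ := Finset.card_pos.1 houter
  rw [mem_neighborsIn] at hu hz
  exact ⟨⟨u, hu⟩, z, Finset.mem_compl.1 hz.1, hz.2⟩

/-- If the bound failed, both ends of some edge `wz` outside `C` would be adjacent to all of `S`.
A marker on the side of `wz` would then have its foot in `S`, and `C` could be prolonged by a
detour through `w` or `wz`. -/
lemma four_mul_minDegree_le_of_notMem_of_mem_right (e : OuterEdge G σ C x y)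
    (c : MinSeparation G S A B) (h4 : 4 ≤ kappa G) (hx : x ∈ A) (hw : w ∈ B) (hwC : w ∉ C) :
    4 * G.minDegree ≤ C.card + 2 * kappa G := by
  classical
  by_contra! hlt
  have ne_right : ∀ {v}, v ∈ B → v ≠ y := fun hv h => c.not_adj x hx y (h ▸ hv) e.adj_ends
  have subset_free : ∀ {v}, v ∈ B → v ∉ C → S ⊆ freeNeighbors G σ C x y v := fun hv hvC =>
    e.subset_freeNeighbors_of_lt c h4 hlt hx hv hvC (ne_right hv)
  obtain ⟨⟨u, hu, hwu⟩, z, hzC, hwz⟩ :=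
    e.exists_adj_markers_and_exists_adj_of_lt c h4 hlt hx hw hwC (ne_right hw)
  have hS : ∀ s ∈ S, s ∈ C ∧ s ∉ markers G σ C x y ∧ G.Adj w s := fun s hs =>
    mem_freeNeighbors.1 (subset_free hw hwC hs)
  have hy : y ∈ A :=
    (c.mem_of_adj_left hx e.adj_ends).resolve_right fun h => e.right_notMem (hS y h).1
  have hz : z ∈ B := (c.mem_of_adj_right hw hwz).resolve_right fun h => hzC (hS z h).1
  have huB : u ∈ B := (c.mem_of_adj_right hw hwu).resolve_right fun h => (hS u h).2.1 hu
  obtain ⟨p, a, hs, rfl⟩ := mem_markers.1 hu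
  have hpC := (mem_feet.1 hs.mem_feet).1
  have hpB : p ∉ B := fun h => (mem_feet.1 hs.mem_feet).2.elim (c.not_adj x hx p h)
    (c.not_adj y hy p h)
  have foot_mem : σ p ∈ B → p ∈ S := fun h =>
    (c.mem_of_adj_right h (e.adj p hpC).symm).resolve_left hpB
  have h3 := e.three_le
  obtain rfl | rfl := hs.eq_one_or_eq_two
  · have hpw := (hS p (foot_mem (by simpa using huB))).2.2.symm
    have := e.two_le_of_adj_of_adj hwC hpC one_pos (by lia) hpw hwu
    lia
  · have hσpB : σ p ∈ B := by
      refine (c.mem_of_adj_right huB ?_).resolve_right fun h =>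
        (hS _ h).2.1 (apply_mem_markers hs.mem_feet)
      simpa [pow_two] using (e.adj _ (e.apply_mem_iff.2 hpC)).symm
    have hpz := (mem_freeNeighbors.1 (subset_free hz hzC (foot_mem hσpB))).2.2.symm
    have := e.three_le_of_adj_of_adj hzC hwC hpC two_pos (by lia) hpz hwz.symm hwu
    lia

lemma four_mul_minDegree_le_of_left_mem (e : OuterEdge G σ C x y) (c : MinSeparation G S A B)
    (h4 : 4 ≤ kappa G) (hx : x ∈ A) : 4 * G.minDegree ≤ C.card + 2 * kappa G := by
  classical
  by_cases hBC : B ⊆ C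
  · by_cases hB : ∃ p ∈ feet G C x y, σ p ∈ B
    · obtain ⟨p, hp, hpB⟩ := hB
      exact e.four_mul_minDegree_le_of_apply_mem_right c h4 hx hBC hp hpB
    · push Not at hB
      exact e.four_mul_minDegree_le_of_right_subset c hBC hB hx (o := 0)
        e.minDegree_le_card_freeNeighbors_left_add_one (by lia) fun _ => by lia
  · obtain ⟨w, hw, hwC⟩ := Finset.not_subset.1 hBC
    exact e.four_mul_minDegree_le_of_notMem_of_mem_right c h4 hx hw hwC

lemma exists_sideWitness [DecidableEq V] (e : OuterEdge G σ C x y)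
    (hA : ∀ w ∈ A, w ∉ C → ∀ v, v ∉ C → ¬ G.Adj w v)
    (hex : ¬ A ⊆ C ∨ ∃ p ∈ feet G C x y, σ p ∈ A) : ∃ w, SideWitness G σ C A x y w := by
  by_cases hAC : A ⊆ C
  · obtain ⟨p, hp, hpA⟩ := hex.resolve_left (not_not.2 hAC)
    have hm := apply_mem_markers (σ := σ) hp
    exact ⟨σ p, hpA, e.minDegree_le_card_freeNeighbors_apply_add hp,
      fun h => e.not_adj_left hm h.symm, fun h => e.not_adj_right hm h.symm,
      fun v hv _ => ⟨hm, fun h => hv (hAC h)⟩⟩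
  · obtain ⟨w, hw, hwC⟩ := Finset.not_subset.1 hAC
    have hno := hA w hw hwC
    exact ⟨w, hw, e.minDegree_le_card_freeNeighbors_add hwC
      (fun h => hno y e.right_notMem (h ▸ e.adj_ends))
      (fun h => hno x e.left_notMem (h ▸ e.adj_ends.symm)),
      hno x e.left_notMem, hno y e.right_notMem, fun v hv h => absurd h (hno v hv)⟩

end OuterEdge

namespace SideWitness

variable [Fintype V] [DecidableEq V] [DecidableRel G.Adj]

lemma neighborsIn_compl_subset (s : SideWitness G σ C A x y w) (c : MinSeparation G S A B) :
    neighborsIn G Cᶜ w ⊆ S \ C := by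
  intro v hv
  obtain ⟨hvC, hwv⟩ := mem_neighborsIn.1 hv
  rw [Finset.mem_compl] at hvC
  exact Finset.mem_sdiff.2
    ⟨(c.mem_of_adj_left s.mem hwv).resolve_left (s.outer v hvC hwv).2, hvC⟩

lemma card_neighborsIn_compl_add_two_le (s : SideWitness G σ C A x y w)
    (e : OuterEdge G σ C x y) (c : MinSeparation G S A B) (hx : x ∈ S) (hy : y ∈ S) :
    (neighborsIn G Cᶜ w).card + 2 ≤ (S \ C).card := by
  have hdisj : Disjoint (neighborsIn G Cᶜ w) {x, y} := by
    simp [Finset.disjoint_right, mem_neighborsIn, s.not_adj_left, s.not_adj_right]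
  rw [← Finset.card_pair e.adj_ends.ne, ← Finset.card_union_of_disjoint hdisj]
  refine Finset.card_le_card (Finset.union_subset (s.neighborsIn_compl_subset c) ?_)
  simp [Finset.insert_subset_iff, hx, hy, e.left_notMem, e.right_notMem]

lemma card_neighborsIn_compl_add_card_le (s : SideWitness G σ C A x y w)
    (t : SideWitness G σ C B x y z) (e : OuterEdge G σ C x y) (c : MinSeparation G S A B) :
    (neighborsIn G Cᶜ w).card + (neighborsIn G Cᶜ z).card ≤ (S \ C).card := by
  have hdisj : Disjoint (neighborsIn G Cᶜ w) (neighborsIn G Cᶜ z) := by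
    refine Finset.disjoint_left.2 fun v hv hv' => ?_
    obtain ⟨hvC, hwv⟩ := mem_neighborsIn.1 hv
    have hzv := (mem_neighborsIn.1 hv').2
    rw [Finset.mem_compl] at hvC
    have hwz : w = z := e.eq_of_adj_of_adj hvC (fun h => s.not_adj_left (h ▸ hwv))
      (fun h => s.not_adj_right (h ▸ hwv)) (s.outer v hvC hwv).1 (t.outer v hvC hzv).1
      hwv.symm hzv.symm
    exact c.disj w s.mem (hwz ▸ t.mem)
  rw [← Finset.card_union_of_disjoint hdisj]
  exact Finset.card_le_card (Finset.union_subset (s.neighborsIn_compl_subset c)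
    (t.neighborsIn_compl_subset c.symm))

lemma four_mul_minDegree_le (s : SideWitness G σ C A x y w) (t : SideWitness G σ C B x y z)
    (e : OuterEdge G σ C x y) (c : MinSeparation G S A B) (h4 : 4 ≤ kappa G) :
    4 * G.minDegree ≤ C.card + 2 * kappa G := by
  have := e.two_mul_minDegree_add_card_add_card_le w z
  have := Finset.card_le_card
    (c.freeNeighbors_inter_subset (σ := σ) (C := C) (x := x) (y := y) s.mem t.mem)
  have := s.card_neighborsIn_compl_add_card_le t e c
  have := c.card_inter_add_card_sdiff C
  have := s.minDegree_le
  have := t.minDegree_le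
  lia

lemma four_mul_minDegree_le_of_right_subset (s : SideWitness G σ C A x y w)
    (e : OuterEdge G σ C x y) (c : MinSeparation G S A B) (hx : x ∈ S) (hy : y ∈ S) (hBC : B ⊆ C)
    (hB : ∀ p ∈ feet G C x y, σ p ∉ B) : 4 * G.minDegree ≤ C.card + 2 * kappa G := by
  have hcard := s.card_neighborsIn_compl_add_two_le e c hx hy
  have hS := c.card_inter_add_card_sdiff C
  refine e.four_mul_minDegree_le_of_right_subset c hBC hB s.mem s.minDegree_le (by lia)
    fun h => ?_
  have := h.card_pos
  lia

end SideWitness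

variable [Fintype V] [DecidableRel G.Adj]

namespace OuterEdge

lemma four_mul_minDegree_le_of_ends_mem (e : OuterEdge G σ C x y) (c : MinSeparation G S A B)
    (h4 : 4 ≤ kappa G) (hx : x ∈ S) (hy : y ∈ S)
    (hS : ∀ w, w ∉ C → w ∉ S → ∀ v, v ∉ C → ¬ G.Adj w v) :
    4 * G.minDegree ≤ C.card + 2 * kappa G := by
  classical
  have hA := fun w hw hwC => hS w hwC (c.disj_left w hw)
  have hB := fun w hw hwC => hS w hwC (c.disj_right w hw)
  by_cases hexA : ¬ A ⊆ C ∨ ∃ p ∈ feet G C x y, σ p ∈ A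
  · obtain ⟨w, s⟩ := e.exists_sideWitness hA hexA
    by_cases hexB : ¬ B ⊆ C ∨ ∃ p ∈ feet G C x y, σ p ∈ B
    · obtain ⟨z, t⟩ := e.exists_sideWitness hB hexB
      exact s.four_mul_minDegree_le t e c h4
    · push Not at hexB
      exact s.four_mul_minDegree_le_of_right_subset e c hx hy hexB.1 hexB.2
  · push Not at hexA
    obtain ⟨p, hp, hpAB⟩ := e.exists_apply_feet_mem c hx hy
    obtain ⟨z, t⟩ := e.exists_sideWitness hB (Or.inr ⟨p, hp, hpAB.resolve_left (hexA.2 p hp)⟩)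
    exact t.four_mul_minDegree_le_of_right_subset e c.symm hx hy hexA.1 hexA.2

lemma four_mul_minDegree_le (e : OuterEdge G σ C x y) (h4 : 4 ≤ kappa G) :
    4 * G.minDegree ≤ C.card + 2 * kappa G := by
  classical
  have : Nonempty V := ⟨x⟩
  have := G.le_minDegree_of_forall_le_degree _ fun v => kappa_le_degree G v
  have hfeet := e.minDegree_le_card_freeNeighbors_left_add_one
  obtain ⟨p, hp⟩ := Finset.card_pos.1 (show 0 < (freeNeighbors G σ C x y x).card by lia)
  obtain ⟨hpC, -, hxp⟩ := mem_freeNeighbors.1 hp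
  have hm : σ p ∈ markers G σ C x y := apply_mem_markers (mem_feet.2 ⟨hpC, Or.inl hxp⟩)
  obtain ⟨S, A, B, c⟩ := exists_minSeparation
    (fun h => e.left_notMem (h ▸ e.apply_mem_iff.2 hpC) : x ≠ σ p) (e.not_adj_left hm)
  by_cases hS : ∀ w, w ∉ C → w ∉ S → ∀ v, v ∉ C → ¬ G.Adj w v
  · exact e.four_mul_minDegree_le_of_ends_mem c h4
      (by_contra fun h => hS x e.left_notMem h y e.right_notMem e.adj_ends)
      (by_contra fun h => hS y e.right_notMem h x e.left_notMem e.adj_ends.symm) hS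
  · push Not at hS
    obtain ⟨w, hwC, hwS, v, hvC, hwv⟩ := hS
    have e' : OuterEdge G σ C w v := { e with
      left_notMem := hwC
      right_notMem := hvC
      adj_ends := hwv }
    rcases c.cover w with h | h | h
    · exact e'.four_mul_minDegree_le_of_left_mem c h4 h
    · exact e'.four_mul_minDegree_le_of_left_mem c.symm h4 h
    · exact absurd h hwS

end OuterEdge

lemma LongestCycle.four_mul_minDegree_le_of_adj (h : LongestCycle G σ C) (h4 : 4 ≤ kappa G)
    (hx : x ∉ C) (hy : y ∉ C) (hxy : G.Adj x y) :
    4 * G.minDegree ≤ C.card + 2 * kappa G := by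
  classical
  by_cases hout : ∀ w, w ∉ C → ∀ u, u ∉ C → ∀ v, v ∉ C → G.Adj w u → G.Adj w v → u = v
  · exact OuterEdge.four_mul_minDegree_le ⟨h, hx, hy, hxy, hout⟩ h4
  · push Not at hout
    obtain ⟨w, hw, u, hu, v, hv, hwu, hwv, huv⟩ := hout
    have hwH : w ∈ componentIn G Cᶜ w := self_mem_componentIn (by simpa)
    have hsub : ({w, u, v} : Finset V) ⊆ componentIn G Cᶜ w := by
      simp [Finset.insert_subset_iff, hwH, mem_componentIn_of_adj hwH hwu, hu,
        mem_componentIn_of_adj hwH hwv, hv]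
    have hcard := Finset.card_le_card hsub
    rw [Finset.card_eq_three.2 ⟨w, u, v, hwu.ne, hwv.ne, huv, rfl⟩] at hcard
    have := h.four_mul_minDegree_le_of_three_le_card (OuterComponent.componentIn_compl w) h4 hcard
    lia

end

/-- every 4-connected finite graph has a cycle of length at least
4δ - 2κ or a dominating cycle. -/
theorem stmt14 [Fintype V] (G : SimpleGraph V) [DecidableRel G.Adj]
    (h4 : 4 ≤ kappa G) :
    (∃ (x : V) (C : G.Walk x x), C.IsCycle ∧
        4 * (G.minDegree : ℤ) - 2 * kappa G ≤ C.length) ∨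
      HasDominatingCycle G := by
  obtain ⟨σ, C, h, x, D, hD, hlen, hmem⟩ :=
    exists_longestCycle (exists_isCycle_of_two_le_kappa (G := G) (by lia))
  by_cases hdom : ∀ a b : V, a ∉ D.support → b ∉ D.support → ¬ G.Adj a b
  · exact Or.inr ⟨x, D, hD, hdom⟩
  · push Not at hdom
    obtain ⟨a, b, ha, hb, hab⟩ := hdom
    have := h.four_mul_minDegree_le_of_adj h4 (mt (hmem a).2 ha) (mt (hmem b).2 hb) hab
    exact Or.inl ⟨x, D, hD, by lia⟩
end
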